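/- arXiv:2502.00526 — 2 statements merged into one kernel-verified Lean document; each statement's English description precedes it below -/
import Mathlib

section
/- Let Δ < 0 be a fundamental discriminant, K = ℚ(√Δ), and let t be the number of prime discriminants in the factorization of Δ (equivalently, the number of distinct prime divisors of Δ). Then the quotient Cl(K)/Cl(K)² of the ideal class group of K by its subgroup of squares has order 2^{t−1}. -/
open NumberField

/-- An integer `Δ ≠ 1` is a fundamental discriminant if either `Δ ≡ 1 (mod 4)` and `Δ` is
squarefree, or `Δ = 4m` where `m` is a squarefree integer with `m ≡ 2` or `3 (mod 4)`. -/
def IsFundamentalDiscriminant (Δ : ℤ) : Prop :=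
  Δ ≠ 1 ∧ ((Δ % 4 = 1 ∧ Squarefree Δ) ∨
    ∃ m : ℤ, Δ = 4 * m ∧ Squarefree m ∧ (m % 4 = 2 ∨ m % 4 = 3))


/-! ### Structure of the quadratic field -/

lemma gt_exists_conj {K : Type} [Field K] [NumberField K] (Δ : ℤ) (hneg : Δ < 0)
    (hdeg : Module.finrank ℚ K = 2) (α : K) (hα : α ^ 2 = (Δ : K)) :
    ∃ σ : K ≃ₐ[ℚ] K, σ α = -α ∧ (∀ x, ∃ r s : ℚ, 2 * x = r + s * α) ∧
      (∀ x, algebraMap ℚ K (Algebra.norm ℚ x) = x * σ x) := by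
  have : Algebra.IsQuadraticExtension ℚ K := ⟨hdeg⟩
  have : IsGalois ℚ K := inferInstance
  have hcard : Nat.card (K ≃ₐ[ℚ] K) = 2 := by rw [IsGalois.card_aut_eq_finrank, hdeg]
  have hαQ : ∀ q : ℚ, (q : K) ≠ α := by
    intro q hq
    rw [← hq] at hα
    have h : q ^ 2 = (Δ : ℚ) := by exact_mod_cast hα
    have : (Δ : ℚ) < 0 := by exact_mod_cast hneg
    nlinarith [sq_nonneg q]
  have hα0 : α ≠ 0 := by
    intro h
    exact hαQ 0 (by simp [h])
  classical
  have hc2 : Fintype.card (K ≃ₐ[ℚ] K) = 2 := by rw [← Nat.card_eq_fintype_card]; exact hcard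
  obtain ⟨σ, hσ⟩ : ∃ σ : K ≃ₐ[ℚ] K, σ ≠ 1 := by
    by_contra! h
    have := Fintype.card_le_one_iff.2 (fun a b : K ≃ₐ[ℚ] K => (h a).trans (h b).symm)
    omega
  have huniv : (Finset.univ : Finset (K ≃ₐ[ℚ] K)) = {1, σ} := by
    symm
    apply Finset.eq_univ_of_card
    rw [Finset.card_pair hσ.symm, hc2]
  have hmem : ∀ τ : K ≃ₐ[ℚ] K, τ = 1 ∨ τ = σ := by
    intro τ
    have := Finset.mem_univ τ
    rw [huniv] at this
    simpa using this
  have hfix : ∀ x, σ x = x → ∃ q : ℚ, (q : K) = x := by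
    intro x hx
    have := (IsGalois.mem_range_algebraMap_iff_fixed (F := ℚ) (E := K) x).2 (by
      intro τ
      rcases hmem τ with rfl | rfl
      · rfl
      · exact hx)
    obtain ⟨q, hq⟩ := this
    exact ⟨q, by simpa using hq⟩
  have hσσ : ∀ x, σ (σ x) = x := by
    intro x
    have : σ * σ = 1 := by
      rcases hmem (σ * σ) with h | h
      · exact h
      · exact absurd (mul_eq_left.1 h) hσ
    exact DFunLike.congr_fun this x
  have hσα : σ α = -α := by
    have h : (σ α) ^ 2 = α ^ 2 := by rw [← map_pow, hα]; simp
    rcases sq_eq_sq_iff_eq_or_eq_neg.1 h with h | h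
    · obtain ⟨q, hq⟩ := hfix α h
      exact absurd hq (hαQ q)
    · exact h
  refine ⟨σ, hσα, ?_, ?_⟩
  · intro x
    obtain ⟨r, hr⟩ := hfix (x + σ x) (by rw [map_add, hσσ, add_comm])
    obtain ⟨s, hs⟩ := hfix ((x - σ x) / α) (by
      rw [map_div₀, map_sub, hσσ, hσα]; field_simp; ring)
    refine ⟨r, s, ?_⟩
    rw [hr, hs]
    field_simp
    ring
  · intro x
    rw [Algebra.norm_eq_prod_automorphisms, huniv, Finset.prod_pair hσ.symm]
    rfl

lemma gt_lin_indep {K : Type} [Field K] [NumberField K] (Δ : ℤ) (hneg : Δ < 0)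
    (α : K) (hα : α ^ 2 = (Δ : K)) (r s r' s' : ℚ) (h : (r : K) + s * α = r' + s' * α) :
    r = r' ∧ s = s' := by
  have hs : s = s' := by
    by_contra hs
    have hs' : ((s : K) - s') ≠ 0 := by
      rw [sub_ne_zero]; exact_mod_cast hs
    have h1 : α = (((r' - r) / (s - s') : ℚ) : K) := by
      push_cast
      rw [eq_div_iff hs']
      linear_combination h
    rw [h1] at hα
    have h : ((r' - r) / (s - s')) ^ 2 = (Δ : ℚ) := by exact_mod_cast hα
    have : (Δ : ℚ) < 0 := by exact_mod_cast hneg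
    nlinarith [sq_nonneg ((r' - r) / (s - s'))]
  subst hs
  refine ⟨?_, rfl⟩
  have : (r : K) = r' := by linear_combination h
  exact_mod_cast this

lemma gt_rat_int_of_sq_mul {d : ℤ} (hd : Squarefree d) (s : ℚ) (n : ℤ) (h : s ^ 2 * d = n) :
    ∃ v : ℤ, (v : ℚ) = s := by
  have hd0 : d ≠ 0 := hd.ne_zero
  -- s = a / b
  have hb : (s.den : ℤ) ≠ 0 := by exact_mod_cast s.den_ne_zero
  have h1 : s.num ^ 2 * d = n * (s.den : ℤ) ^ 2 := by
    have h2 : (s.num : ℚ) / s.den = s := Rat.num_div_den s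
    have h3 : (s.den : ℚ) ≠ 0 := by exact_mod_cast s.den_ne_zero
    rw [← h2] at h
    field_simp at h
    have h' : s.num ^ 2 * d = (s.den : ℤ) ^ 2 * n := by exact_mod_cast h
    rw [h', mul_comm]
  have hcop : IsCoprime ((s.den : ℤ) ^ 2) (s.num ^ 2) := by
    apply IsCoprime.pow
    rw [Int.isCoprime_iff_gcd_eq_one]
    have := s.reduced
    rw [Int.gcd_comm]
    simpa [Int.gcd, Nat.Coprime] using this
  have h4 : ((s.den : ℤ)) * s.den ∣ d := by
    rw [← sq]
    exact hcop.dvd_of_dvd_mul_left ⟨n, by rw [h1]; ring⟩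
  have h5 : IsUnit (s.den : ℤ) := hd _ h4
  have h6 : s.den = 1 := by
    have := Int.isUnit_iff.1 h5
    omega
  exact ⟨s.num, by rw [Rat.coe_int_num_of_den_eq_one h6]⟩

/-- Integers of `K` are `(u + v α)/2`. -/
lemma gt_repr {K : Type} [Field K] [NumberField K] (Δ : ℤ) (hΔ : IsFundamentalDiscriminant Δ)
    (α : K) (hα : α ^ 2 = (Δ : K)) (σ : K ≃ₐ[ℚ] K) (hσ : σ α = -α)
    (hrep : ∀ x : K, ∃ r s : ℚ, 2 * x = r + s * α) (x : 𝓞 K) :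
    ∃ u v N : ℤ, 2 * (x : K) = u + v * α ∧ u ^ 2 - Δ * v ^ 2 = 4 * N ∧
      (x : K) * σ x = N := by
  obtain ⟨r, s, h⟩ := hrep x
  have hσx : 2 * σ (x : K) = r - s * α := by
    have := congrArg σ h
    simp only [map_mul, map_add, hσ, map_ratCast] at this
    rw [map_ofNat] at this
    rw [this]; ring
  have hxint : IsIntegral ℤ (x : K) := x.2
  have hxint' : IsIntegral ℤ (σ (x : K)) := hxint.map (σ.toAlgHom.restrictScalars ℤ)
  have key : ∀ q : ℚ, IsIntegral ℤ (q : K) → ∃ n : ℤ, (n : ℚ) = q := by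
    intro q hq
    have h2 : IsIntegral ℤ q := by
      have : (q : K) = algebraMap ℚ K q := by simp
      rw [this] at hq
      exact (isIntegral_algebraMap_iff (algebraMap ℚ K).injective).1 hq
    obtain ⟨n, hn⟩ := IsIntegrallyClosed.isIntegral_iff.1 h2
    exact ⟨n, by simpa using hn⟩
  obtain ⟨u, hu⟩ := key r (by
    have : (r : K) = x + σ x := by
      apply mul_left_cancel₀ (two_ne_zero (α := K))
      linear_combination -h - hσx
    rw [this]
    exact hxint.add hxint')
  have hNK : (x : K) * σ x = ((r ^ 2 - Δ * s ^ 2) / 4 : ℚ) := by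
    have : (2 * (x : K)) * (2 * σ x) = r ^ 2 - s ^ 2 * Δ := by
      rw [h, hσx, ← hα]; ring
    push_cast
    rw [eq_div_iff (by norm_num)]
    linear_combination this
  obtain ⟨N, hN⟩ := key ((r ^ 2 - Δ * s ^ 2) / 4) (by
    rw [← hNK]
    exact hxint.mul hxint')
  have hN' : (u : ℚ) ^ 2 - Δ * s ^ 2 = 4 * N := by rw [hN, hu]; ring
  obtain ⟨v, hv⟩ : ∃ v : ℤ, (v : ℚ) = s := by
    rcases hΔ.2 with ⟨_, hsf⟩ | ⟨m, hm, hsf, hm4⟩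
    · exact gt_rat_int_of_sq_mul hsf s (u ^ 2 - 4 * N) (by push_cast; linarith)
    · obtain ⟨w, hw⟩ := gt_rat_int_of_sq_mul hsf (2 * s) (u ^ 2 - 4 * N) (by
        push_cast; rw [hm] at hN'; push_cast at hN'; linarith)
      have h1 : u ^ 2 - m * w ^ 2 = 4 * N := by
        have : (u : ℚ) ^ 2 - m * w ^ 2 = 4 * N := by
          rw [hw, ← hN', hm]; push_cast; ring
        exact_mod_cast this
      rcases Int.even_or_odd' w with ⟨w', rfl | rfl⟩
      · refine ⟨w', ?_⟩
        push_cast at hw; linarith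
      · exfalso
        have h2 : (u ^ 2) % 4 = m % 4 := by
          have : u ^ 2 = m + 4 * (N + m * (w' ^ 2 + w')) := by linarith
          omega
        rcases Int.even_or_odd' u with ⟨u', rfl | rfl⟩
        · ring_nf at h2; omega
        · ring_nf at h2; omega
  refine ⟨u, v, N, ?_, ?_, ?_⟩
  · rw [h, ← hu, ← hv]; simp
  · rw [← hv] at hN'; exact_mod_cast hN'
  · rw [hNK, ← hN]; simp

lemma gt_mk {K : Type} [Field K] [NumberField K] (Δ : ℤ)
    (α : K) (hα : α ^ 2 = (Δ : K)) (u v N : ℤ) (h : u ^ 2 - Δ * v ^ 2 = 4 * N) :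
    ∃ x : 𝓞 K, 2 * (x : K) = u + v * α := by
  have hy : IsIntegral ℤ ((u + v * α) / 2 : K) := by
    refine ⟨Polynomial.X ^ 2 - Polynomial.C u * Polynomial.X + Polynomial.C N, ?_, ?_⟩
    · monicity!
    · have h' : (u : K) ^ 2 - Δ * v ^ 2 = 4 * N := by exact_mod_cast h
      simp only [Polynomial.eval₂_add, Polynomial.eval₂_sub, Polynomial.eval₂_mul,
        Polynomial.eval₂_pow, Polynomial.eval₂_X, Polynomial.eval₂_C]
      simp only [algebraMap_int_eq, eq_intCast]
      linear_combination (v ^ 2 / 4) * hα - (1 / 4) * h'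
  refine ⟨⟨_, hy⟩, ?_⟩
  change (2 : K) * ((u + v * α) / 2) = _
  ring

/-- The data used throughout the proof. -/
structure GTData {K : Type} [Field K] [NumberField K] (Δ : ℤ) (α : K) (σ : K ≃ₐ[ℚ] K) :
    Prop where
  fund : IsFundamentalDiscriminant Δ
  neg : Δ < 0
  sq : α ^ 2 = (Δ : K)
  conj : σ α = -α
  rep : ∀ x : K, ∃ r s : ℚ, 2 * x = r + s * α
  norm : ∀ x : K, algebraMap ℚ K (Algebra.norm ℚ x) = x * σ x

section
variable {K : Type} [Field K] [NumberField K] {Δ : ℤ} {α : K} {σ : K ≃ₐ[ℚ] K}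

lemma GTData.repr (D : GTData Δ α σ) (x : 𝓞 K) :
    ∃ u v N : ℤ, 2 * (x : K) = u + v * α ∧ u ^ 2 - Δ * v ^ 2 = 4 * N ∧
      (x : K) * σ x = N :=
  gt_repr Δ D.fund α D.sq σ D.conj D.rep x

lemma GTData.mk' (D : GTData Δ α σ) (u v N : ℤ) (h : u ^ 2 - Δ * v ^ 2 = 4 * N) :
    ∃ x : 𝓞 K, 2 * (x : K) = u + v * α :=
  gt_mk Δ α D.sq u v N h

lemma GTData.indep (D : GTData Δ α σ) (r s r' s' : ℤ) (h : (r : K) + s * α = r' + s' * α) :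
    r = r' ∧ s = s' := by
  have := gt_lin_indep Δ D.neg α D.sq r s r' s' (by push_cast; exact h)
  exact_mod_cast this

lemma gt_fund_mod {Δ : ℤ} (h : IsFundamentalDiscriminant Δ) : Δ % 4 = 1 ∨ Δ % 4 = 0 := by
  rcases h.2 with ⟨h, _⟩ | ⟨m, h, _⟩ <;> omega

/-- Integer arithmetic behind unramified primes are squarefree. -/
lemma gt_arith (p : ℕ) (hp : p.Prime) {Δ : ℤ} (h4 : Δ % 4 = 1 ∨ Δ % 4 = 0)
    (hpΔ : ¬ (p : ℤ) ∣ Δ) (u v N u' v' N' : ℤ) (h1 : u ^ 2 - Δ * v ^ 2 = 4 * N)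
    (h2 : u' ^ 2 - Δ * v' ^ 2 = 4 * N') (h3 : u ^ 2 + Δ * v ^ 2 = 2 * p * u')
    (h5 : u * v = p * v') :
    ∃ u1 v1 N1 : ℤ, u = p * u1 ∧ v = p * v1 ∧ u1 ^ 2 - Δ * v1 ^ 2 = 4 * N1 := by
  have hpp : Prime (p : ℤ) := Nat.prime_iff_prime_int.1 hp
  have hN : N ^ 2 = p ^ 2 * N' := by
    have : 16 * N ^ 2 = 16 * (p ^ 2 * N') := by
      have e1 : (4 * N) ^ 2 = (u ^ 2 + Δ * v ^ 2) ^ 2 - 4 * Δ * (u * v) ^ 2 := by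
        rw [← h1]; ring
      rw [h3, h5] at e1
      linear_combination e1 + 4 * p ^ 2 * h2
    linarith
  have hpN : (p : ℤ) ∣ N := hpp.dvd_of_dvd_pow (n := 2) ⟨p * N', by rw [hN]; ring⟩
  have hpu : (p : ℤ) ∣ u := by
    apply hpp.dvd_of_dvd_pow (n := 2)
    obtain ⟨k, hk⟩ := hpN
    exact ⟨u' + 2 * k, by linarith [show (p:ℤ) * (u' + 2 * k) = p * u' + 2 * N by rw [hk]; ring]⟩
  have hpv : (p : ℤ) ∣ v := by
    have : (p : ℤ) ∣ Δ * v ^ 2 := by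
      have e : Δ * v ^ 2 = u * u - 4 * N := by linarith [sq u]
      rw [e]
      exact dvd_sub (Dvd.dvd.mul_right hpu _) (Dvd.dvd.mul_left hpN _)
    exact hpp.dvd_of_dvd_pow ((hpp.dvd_or_dvd this).resolve_left hpΔ)
  obtain ⟨u1, rfl⟩ := hpu
  obtain ⟨v1, rfl⟩ := hpv
  suffices h : (4 : ℤ) ∣ u1 ^ 2 - Δ * v1 ^ 2 by
    obtain ⟨N1, hN1⟩ := h
    exact ⟨u1, v1, N1, rfl, rfl, hN1⟩
  rcases hp.eq_two_or_odd' with rfl | hodd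
  · have hΔ1 : Δ % 4 = 1 := by
      rcases h4 with h | h
      · exact h
      · exact absurd (by push_cast; omega) hpΔ
    obtain ⟨k, rfl⟩ := hpN
    have e : u1 ^ 2 - Δ * v1 ^ 2 = 2 * k := by
      push_cast at h1; linarith
    obtain ⟨d, hd⟩ : ∃ d, Δ = 4 * d + 1 := ⟨Δ / 4, by omega⟩
    subst hd
    rcases Int.even_or_odd' u1 with ⟨a, rfl | rfl⟩ <;>
    rcases Int.even_or_odd' v1 with ⟨b, rfl | rfl⟩
    · exact ⟨a ^ 2 - (4 * d + 1) * b ^ 2, by ring⟩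
    · exfalso
      have : 2 * (2 * a ^ 2 - (4 * d + 1) * (2 * b ^ 2 + 2 * b) - 2 * d - k) = 1 := by linarith
      omega
    · exfalso
      have : 2 * (2 * a ^ 2 + 2 * a - 2 * (4 * d + 1) * b ^ 2 - k) = -1 := by linarith
      omega
    · exact ⟨a ^ 2 + a - (4 * d + 1) * (b ^ 2 + b) - d, by ring⟩
  · have hc : IsCoprime (4 : ℤ) ((p : ℤ) ^ 2) := by
      have : Nat.Coprime 4 (p ^ 2) := by
        have : Nat.Coprime (2 ^ 2) (p ^ 2) :=
          Nat.Coprime.pow _ _ (Nat.coprime_two_left.2 hodd)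
        simpa using this
      exact_mod_cast Nat.isCoprime_iff_coprime.2 this
    exact hc.dvd_of_dvd_mul_left ⟨N, by rw [← h1]; ring⟩

lemma gt_ext {K : Type} [Field K] {x y : 𝓞 K}
    (h : algebraMap (𝓞 K) K x = algebraMap (𝓞 K) K y) : x = y := RingOfIntegers.ext h

lemma GTData.dvd_of_unram (D : GTData Δ α σ) (p : ℕ) (hp : p.Prime) (hpΔ : ¬ (p : ℤ) ∣ Δ)
    (x : 𝓞 K) (h : (p : 𝓞 K) ∣ x ^ 2) : (p : 𝓞 K) ∣ x := by
  obtain ⟨y, hy⟩ := h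
  obtain ⟨u, v, N, hx, hN, -⟩ := D.repr x
  obtain ⟨u', v', N', hy', hN', -⟩ := D.repr y
  have hK : (x : K) ^ 2 = p * y := by
    have := congrArg (algebraMap (𝓞 K) K) hy
    simpa using this
  have e : (((u ^ 2 + Δ * v ^ 2 : ℤ) : K)) + ((2 * u * v : ℤ) : K) * α
      = ((2 * p * u' : ℤ) : K) + ((2 * p * v' : ℤ) : K) * α := by
    push_cast
    have : (2 * (x : K)) ^ 2 = 2 * p * (2 * y) := by linear_combination 4 * hK
    rw [hx, hy'] at this
    linear_combination this - v ^ 2 * D.sq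
  obtain ⟨e1, e2⟩ := D.indep _ _ _ _ e
  obtain ⟨u1, v1, N1, hu, hv, h1⟩ := gt_arith p hp (gt_fund_mod D.fund) hpΔ u v N u' v' N' hN hN'
    e1 (by linarith)
  obtain ⟨z, hz⟩ := D.mk' u1 v1 N1 h1
  refine ⟨z, gt_ext ?_⟩
  apply mul_left_cancel₀ (two_ne_zero (α := K))
  rw [hx, hu, hv]
  push_cast
  linear_combination (-(p : K)) * hz

lemma gt_ideal_sq {R : Type*} [CommRing R] (p β w a b c : R) (h : β ^ 2 = p * w)
    (h1 : a * p + b * β + c * w = 1) : (Ideal.span {p, β}) ^ 2 = Ideal.span {p} := by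
  rw [sq, Ideal.span_pair_mul_span_pair]
  apply le_antisymm
  · rw [Ideal.span_le]
    intro x hx
    simp only [Set.mem_insert_iff, Set.mem_singleton_iff] at hx
    rw [SetLike.mem_coe, Ideal.mem_span_singleton]
    rcases hx with rfl | rfl | rfl | rfl
    · exact ⟨p, rfl⟩
    · exact ⟨β, rfl⟩
    · exact ⟨β, mul_comm _ _⟩
    · exact ⟨w, by rw [← h]; ring⟩
  · rw [Ideal.span_singleton_le_iff_mem]
    have : p = a * (p * p) + b * (p * β) + c * (β * β) := by
      linear_combination (-p) * h1 - c * h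
    have key : a * (p * p) + b * (p * β) + c * (β * β) ∈
        Ideal.span {p * p, p * β, β * p, β * β} := by
      refine Ideal.add_mem _ (Ideal.add_mem _ ?_ ?_) ?_ <;>
      · apply Ideal.mul_mem_left
        apply Ideal.subset_span
        simp
    rwa [← this] at key

/-- `α` or `α / 2`: square root of the squarefree part. -/
lemma GTData.exists_sqrt (D : GTData Δ α σ) :
    ∃ (m : ℤ) (γ : 𝓞 K), Squarefree m ∧ γ ^ 2 = m ∧ m < 0 ∧
      ((Δ = m ∧ Δ % 4 = 1) ∨ (Δ = 4 * m ∧ (m % 4 = 2 ∨ m % 4 = 3))) := by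
  rcases D.fund.2 with ⟨h4, hsf⟩ | ⟨m, hm, hsf, hm4⟩
  · obtain ⟨γ, hγ⟩ := D.mk' 0 2 (-Δ) (by ring)
    refine ⟨Δ, γ, hsf, gt_ext ?_, D.neg, Or.inl ⟨rfl, h4⟩⟩
    have : (γ : K) = α := by
      apply mul_left_cancel₀ (two_ne_zero (α := K))
      rw [hγ]; push_cast; ring
    have e : algebraMap (𝓞 K) K γ = α := this
    rw [map_pow, map_intCast, e, D.sq]
  · obtain ⟨γ, hγ⟩ := D.mk' 0 1 (-m) (by rw [hm]; ring)
    refine ⟨m, γ, hsf, gt_ext ?_, by have := D.neg; omega, Or.inr ⟨hm, hm4⟩⟩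
    rw [map_pow, map_intCast]
    have : (2 * (γ : K)) ^ 2 = 4 * m := by
      rw [hγ]; push_cast
      have h2 := D.sq
      rw [hm] at h2
      push_cast at h2
      linear_combination h2
    apply mul_left_cancel₀ (show (4 : K) ≠ 0 by norm_num)
    linear_combination this

lemma gt_sq_coprime {m : ℤ} (hm : Squarefree m) (p : ℕ) (hp : p.Prime) (h : (p : ℤ) ∣ m) :
    ∃ w a c : ℤ, m = p * w ∧ a * p + c * w = 1 := by
  obtain ⟨w, rfl⟩ := h
  have hpp : Prime (p : ℤ) := Nat.prime_iff_prime_int.1 hp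
  have hnd : ¬ (p : ℤ) ∣ w := by
    intro h
    exact hpp.not_isUnit (hm p (mul_dvd_mul_left _ h))
  obtain ⟨a, c, h⟩ := (hpp.coprime_iff_not_dvd).2 hnd
  exact ⟨w, a, c, rfl, h⟩

lemma GTData.exists_ramified (D : GTData Δ α σ) (p : ℕ) (hp : p.Prime) (hpΔ : (p : ℤ) ∣ Δ) :
    ∃ P : Ideal (𝓞 K), P ^ 2 = Ideal.span {(p : 𝓞 K)} := by
  obtain ⟨m, γ, hsf, hγ, hmneg, hm⟩ := D.exists_sqrt
  have hpp : Prime (p : ℤ) := Nat.prime_iff_prime_int.1 hp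
  by_cases hpm : (p : ℤ) ∣ m
  · obtain ⟨w, a, c, h1, h2⟩ := gt_sq_coprime hsf p hp hpm
    refine ⟨_, gt_ideal_sq (p : 𝓞 K) γ w a 0 c ?_ ?_⟩
    · rw [hγ, h1]; push_cast; ring
    · have : ((a * p + c * w : ℤ) : 𝓞 K) = 1 := by rw [h2]; simp
      push_cast at this
      linear_combination this
  · rcases hm with ⟨h, _⟩ | ⟨h, h4⟩
    · rw [h] at hpΔ; exact absurd hpΔ hpm
    · rw [h] at hpΔ
      have hp2 : (p : ℤ) ∣ 2 := by
        have h' := (hpp.dvd_or_dvd hpΔ).resolve_right hpm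
        exact hpp.dvd_of_dvd_pow (n := 2) (by norm_num; exact h')
      have hp2' : p = 2 := by
        have : p ∣ 2 := by exact_mod_cast hp2
        exact (Nat.prime_dvd_prime_iff_eq hp Nat.prime_two).1 this
      subst hp2'
      have h3 : m % 4 = 3 := by
        rcases h4 with h4 | h4
        · exact absurd (by push_cast; omega) hpm
        · exact h4
      obtain ⟨k, hk⟩ : ∃ k, m = 4 * k + 3 := ⟨m / 4, by omega⟩
      have hγ' : γ ^ 2 = 4 * (k : 𝓞 K) + 3 := by rw [hγ, hk]; push_cast; ring
      -- β = 1 + γ, w = 2k + 2 + γ ; β - w = -(2k+1)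
      refine ⟨_, gt_ideal_sq ((2 : ℕ) : 𝓞 K) (1 + γ) (2 * k + 2 + γ) (-k) (-1) 1 ?_ ?_⟩
      · push_cast; linear_combination hγ'
      · push_cast; ring

end

section
open nonZeroDivisors
variable {R : Type*} [CommRing R] [IsDedekindDomain R]

lemma gt_prin (I : (Ideal R)⁰) (h : ClassGroup.mk0 I ^ 2 = 1) :
    ∃ b : R, (I : Ideal R) ^ 2 = Ideal.span {b} := by
  rw [← map_pow] at h
  have e : I ^ 2 = ⟨(I : Ideal R) ^ 2, pow_mem I.2 2⟩ := Subtype.ext (SubmonoidClass.coe_pow I 2)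
  rw [e] at h
  have h2 := h
  obtain ⟨b, hb⟩ := (ClassGroup.mk0_eq_one_iff _).1 h2
  exact ⟨b, by rw [hb, Ideal.submodule_span_eq]⟩

lemma gt_sq_dvd (p n : R) (J J1 : Ideal R) (hJ1 : J = Ideal.span {p} * J1)
    (hJ : J ^ 2 = Ideal.span {n}) : p ^ 2 ∣ n := by
  rw [← Ideal.mem_span_singleton]
  have h1 : n ∈ J ^ 2 := by
    rw [hJ]; exact Ideal.mem_span_singleton_self _
  rw [hJ1, mul_pow, Ideal.span_singleton_pow] at h1
  have hle : Ideal.span {p ^ 2} * J1 ^ 2 ≤ Ideal.span {p ^ 2} := Ideal.mul_le_left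
  exact hle h1

lemma gt_cancel (p n1 : R) (hp0 : p ≠ 0) (J J1 : Ideal R) (hJ1 : J = Ideal.span {p} * J1)
    (hJ : J ^ 2 = Ideal.span {p ^ 2 * n1}) : J1 ^ 2 = Ideal.span {n1} := by
  have h2 : Ideal.span {p ^ 2} * J1 ^ 2 = Ideal.span {p ^ 2} * Ideal.span {n1} := by
    rw [Ideal.span_singleton_mul_span_singleton, ← Ideal.span_singleton_pow, ← mul_pow,
      ← hJ1, hJ]
  refine mul_left_cancel₀ ?_ h2
  rw [Ne, Ideal.zero_eq_bot, Ideal.span_singleton_eq_bot]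
  exact pow_ne_zero 2 hp0

lemma gt_sq_inj {I J : Ideal R} (h : I ^ 2 = J ^ 2) : I = J := by
  apply le_antisymm
  · rw [← Ideal.dvd_iff_le, ← UniqueFactorizationMonoid.pow_dvd_pow_iff_dvd (n := 2) two_ne_zero, h]
  · rw [← Ideal.dvd_iff_le, ← UniqueFactorizationMonoid.pow_dvd_pow_iff_dvd (n := 2) two_ne_zero, h]

lemma gt_prod_eq_one_iff (T : Finset ℕ) (P : ℕ → (Ideal R)⁰)
    (hP : ∀ p ∈ T, (P p : Ideal R) ^ 2 = Ideal.span {(p : R)}) (S : Finset ℕ) (hS : S ⊆ T) :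
    ((∏ p ∈ S, P p : (Ideal R)⁰) : Ideal R) ^ 2 = Ideal.span {((∏ p ∈ S, p : ℕ) : R)} ∧
    (∏ p ∈ S, ClassGroup.mk0 (P p) = 1 ↔
      ∃ a : R, Ideal.span {a} ^ 2 = Ideal.span {((∏ p ∈ S, p : ℕ) : R)}) := by
  have h1 : ((∏ p ∈ S, P p : (Ideal R)⁰) : Ideal R) ^ 2
      = Ideal.span {((∏ p ∈ S, p : ℕ) : R)} := by
    rw [Submonoid.coe_finsetProd, ← Finset.prod_pow, Nat.cast_prod,
      ← Ideal.prod_span_singleton]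
    exact Finset.prod_congr rfl fun p hp => hP p (hS hp)
  refine ⟨h1, ?_⟩
  rw [← map_prod]
  have h2 := ClassGroup.mk0_eq_one_iff (∏ p ∈ S, P p : (Ideal R)⁰).2
  refine h2.trans ?_
  constructor
  · rintro ⟨a, ha⟩
    rw [Ideal.submodule_span_eq] at ha
    exact ⟨a, by rw [← ha, h1]⟩
  · rintro ⟨a, ha⟩
    refine ⟨a, ?_⟩
    rw [Ideal.submodule_span_eq]
    exact gt_sq_inj (h1.trans ha.symm)

end

section
variable {K : Type} [Field K] [NumberField K] {Δ : ℤ} {α : K} {σ : K ≃ₐ[ℚ] K}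

lemma GTData.natCast_dvd (D : GTData Δ α σ) (a b : ℕ) (h : (a : 𝓞 K) ∣ b) : a ∣ b := by
  obtain ⟨y, hy⟩ := h
  obtain ⟨u, v, N, hu, hN, -⟩ := D.repr y
  have hK : (b : K) = a * y := by
    have := congrArg (algebraMap (𝓞 K) K) hy
    simpa using this
  have e : ((2 * b : ℤ) : K) + ((0 : ℤ) : K) * α = ((a * u : ℤ) : K) + ((a * v : ℤ) : K) * α := by
    push_cast
    linear_combination 2 * hK + a * hu
  obtain ⟨e1, e2⟩ := D.indep _ _ _ _ e
  rcases Nat.eq_zero_or_pos a with rfl | ha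
  · have : b = 0 := by
      push_cast at e1; omega
    simp [this]
  · have hv : v = 0 := by
      rcases mul_eq_zero.1 e2.symm with h | h
      · omega
      · exact h
    subst hv
    have hev : Even u := by
      have : Even (u ^ 2) := ⟨2 * N, by linarith⟩
      exact (Int.even_pow.1 this).1
    obtain ⟨w, rfl⟩ := hev
    have : (a : ℤ) ∣ b := ⟨w, by linarith⟩
    exact_mod_cast this

lemma GTData.norm_nonneg (D : GTData Δ α σ) {u v N : ℤ} (h : u ^ 2 - Δ * v ^ 2 = 4 * N) :
    0 ≤ N := by
  have := D.neg
  nlinarith [sq_nonneg u, sq_nonneg v, mul_nonneg (by linarith : 0 ≤ -Δ) (sq_nonneg v)]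

lemma GTData.absNorm (D : GTData Δ α σ) (x : 𝓞 K) :
    (x : K) * σ x = (Ideal.absNorm (Ideal.span {x}) : ℕ) := by
  obtain ⟨u, v, N, hu, hN, hN'⟩ := D.repr x
  have h0 := D.norm_nonneg hN
  have h1 := D.norm (x : K)
  rw [hN'] at h1
  have h2 : Algebra.norm ℚ (x : K) = (N : ℚ) := by
    apply (algebraMap ℚ K).injective
    rw [h1]; simp
  have h3 : Algebra.norm ℤ x = N := by
    have := Algebra.coe_norm_int x
    rw [h2] at this
    exact_mod_cast this
  rw [Ideal.absNorm_span_singleton, h3, hN']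
  have : ((N.natAbs : ℕ) : ℤ) = N := Int.natAbs_of_nonneg h0
  rw [← Int.cast_natCast, this]

lemma gt_exists_conj_int (σ : K ≃ₐ[ℚ] K) (x : 𝓞 K) : ∃ y : 𝓞 K, (y : K) = σ x := by
  have hxint : IsIntegral ℤ (x : K) := x.2
  have hxint' : IsIntegral ℤ (σ (x : K)) := hxint.map (σ.toAlgHom.restrictScalars ℤ)
  exact ⟨⟨_, hxint'⟩, rfl⟩

open nonZeroDivisors in
lemma GTData.reduce (D : GTData Δ α σ) (n : ℕ) : 0 < n → ∀ J : (Ideal (𝓞 K))⁰,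
    (J : Ideal (𝓞 K)) ^ 2 = Ideal.span {(n : 𝓞 K)} →
    ∃ (n' : ℕ) (J' : (Ideal (𝓞 K))⁰), Squarefree n' ∧ (∀ p : ℕ, p.Prime → p ∣ n' → (p : ℤ) ∣ Δ) ∧
      (J' : Ideal (𝓞 K)) ^ 2 = Ideal.span {(n' : 𝓞 K)} ∧
      ClassGroup.mk0 J = ClassGroup.mk0 J' := by
  induction n using Nat.strong_induction_on with
  | _ n ih =>
  intro hn J hJ
  -- main reduction step
  have step : ∀ p : ℕ, p.Prime → (∀ x ∈ (J : Ideal (𝓞 K)), (p : 𝓞 K) ∣ x) →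
      ∃ (n' : ℕ) (J' : (Ideal (𝓞 K))⁰), Squarefree n' ∧
      (∀ p : ℕ, p.Prime → p ∣ n' → (p : ℤ) ∣ Δ) ∧
      (J' : Ideal (𝓞 K)) ^ 2 = Ideal.span {(n' : 𝓞 K)} ∧
      ClassGroup.mk0 J = ClassGroup.mk0 J' := by
    intro p hp hle
    have hdvd : Ideal.span {(p : 𝓞 K)} ∣ (J : Ideal (𝓞 K)) := by
      rw [Ideal.dvd_iff_le]
      intro x hx
      exact Ideal.mem_span_singleton.2 (hle x hx)
    obtain ⟨J1, hJ1⟩ := hdvd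
    have hJ0 : (J : Ideal (𝓞 K)) ≠ 0 := nonZeroDivisors.coe_ne_zero J
    have hJ10 : J1 ≠ 0 := by
      rintro rfl
      rw [mul_zero] at hJ1
      exact hJ0 hJ1
    have hp0 : (p : 𝓞 K) ≠ 0 := by exact_mod_cast hp.ne_zero
    have hpn : p ^ 2 ∣ n := by
      apply D.natCast_dvd
      have := gt_sq_dvd (p : 𝓞 K) n J J1 hJ1 hJ
      exact_mod_cast this
    obtain ⟨n1, rfl⟩ := hpn
    have hn1 : 0 < n1 := Nat.pos_of_mul_pos_left hn
    have hlt : n1 < p ^ 2 * n1 := by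
      have : 1 < p ^ 2 := Nat.one_lt_pow two_ne_zero hp.one_lt
      nlinarith
    have hsq : J1 ^ 2 = Ideal.span {(n1 : 𝓞 K)} :=
      gt_cancel (p : 𝓞 K) n1 hp0 J J1 hJ1 (by rw [hJ]; push_cast; rfl)
    obtain ⟨n', J', a, b, c, d⟩ := ih n1 hlt hn1 ⟨J1, mem_nonZeroDivisors_of_ne_zero hJ10⟩ hsq
    refine ⟨n', J', a, b, c, ?_⟩
    rw [← d, ClassGroup.mk0_eq_mk0_iff]
    refine ⟨1, p, one_ne_zero, hp0, ?_⟩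
    rw [hJ1]
    simp
  have hmem : ∀ x ∈ (J : Ideal (𝓞 K)), (n : 𝓞 K) ∣ x ^ 2 := by
    intro x hx
    rw [← Ideal.mem_span_singleton, ← hJ]
    exact Ideal.pow_mem_pow hx 2
  by_cases hsf : Squarefree n
  · by_cases hram : ∀ p : ℕ, p.Prime → p ∣ n → (p : ℤ) ∣ Δ
    · exact ⟨n, J, hsf, hram, hJ, rfl⟩
    · push Not at hram
      obtain ⟨p, hp, hpn, hpΔ⟩ := hram
      refine step p hp fun x hx => D.dvd_of_unram p hp hpΔ x ?_
      exact (Nat.cast_dvd_cast hpn).trans (hmem x hx)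
  · rw [Nat.squarefree_iff_prime_squarefree] at hsf
    push Not at hsf
    obtain ⟨p, hp, hpn⟩ := hsf
    refine step p hp fun x hx => ?_
    rw [← IsIntegrallyClosed.pow_dvd_pow_iff (n := 2) two_ne_zero]
    refine dvd_trans ?_ (hmem x hx)
    rw [pow_two]
    exact_mod_cast Nat.cast_dvd_cast (α := 𝓞 K) hpn

open nonZeroDivisors in
lemma GTData.two_torsion (D : GTData Δ α σ) (c : ClassGroup (𝓞 K)) (hc : c ^ 2 = 1) :
    ∃ (n : ℕ) (J : (Ideal (𝓞 K))⁰), 0 < n ∧ (J : Ideal (𝓞 K)) ^ 2 = Ideal.span {(n : 𝓞 K)} ∧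
      ClassGroup.mk0 J = c := by
  obtain ⟨I, rfl⟩ := ClassGroup.mk0_surjective c
  have hI0 : (I : Ideal (𝓞 K)) ≠ 0 := nonZeroDivisors.coe_ne_zero I
  have hprin := gt_prin I hc
  obtain ⟨k, hk⟩ : ∃ k, k = Ideal.absNorm (I : Ideal (𝓞 K)) := ⟨_, rfl⟩
  have hkpos : 0 < k := by
    rw [hk, Nat.pos_iff_ne_zero, Ne, Ideal.absNorm_eq_zero_iff]
    exact hI0
  have hk0 : (k : 𝓞 K) ≠ 0 := by exact_mod_cast hkpos.ne'
  obtain ⟨b, hb, hbk⟩ : ∃ b : 𝓞 K, (I : Ideal (𝓞 K)) ^ 2 = Ideal.span {b} ∧ b + k ≠ 0 := by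
    obtain ⟨b, hb⟩ := hprin
    by_cases h : b + k = 0
    · refine ⟨-b, by rw [hb, Ideal.span_singleton_neg], ?_⟩
      intro h'
      have : (2 : 𝓞 K) * k = 0 := by linear_combination h + h'
      rcases mul_eq_zero.1 this with h | h
      · exact two_ne_zero h
      · exact hk0 h
    · exact ⟨b, hb, h⟩
  have hnb : (b : K) * σ b = (k : K) ^ 2 := by
    rw [D.absNorm, ← hb, map_pow, ← hk]; push_cast; rfl
  obtain ⟨c', hc'⟩ := gt_exists_conj_int σ (b + k)
  obtain ⟨M, hM⟩ : ∃ M, M = Ideal.absNorm (Ideal.span {b + (k : 𝓞 K)}) := ⟨_, rfl⟩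
  have hMpos : 0 < M := by
    rw [hM, Nat.pos_iff_ne_zero, Ne, Ideal.absNorm_eq_zero_iff, Ideal.span_singleton_eq_bot]
    exact hbk
  have hcc : (b + k) * c' = (M : 𝓞 K) := by
    apply gt_ext
    rw [map_mul, map_natCast, hM, ← D.absNorm, ← hc']
  have hcb : c' * b = k * (b + k) := by
    apply gt_ext
    rw [map_mul, map_mul, map_add, map_natCast]
    have e : (algebraMap (𝓞 K) K) c' = σ (algebraMap (𝓞 K) K b) + k := by
      have : (algebraMap (𝓞 K) K) c' = σ (algebraMap (𝓞 K) K (b + k)) := hc'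
      rw [this, map_add, map_add, map_natCast, map_natCast]
    have e2 : algebraMap (𝓞 K) K b * σ (algebraMap (𝓞 K) K b) = (k : K) ^ 2 := hnb
    rw [e]
    linear_combination e2
  have hc0 : c' ≠ 0 := by
    rintro rfl
    rw [mul_zero] at hcc
    have : M = 0 := by exact_mod_cast hcc.symm
    omega
  have hs0 : Ideal.span {c'} ≠ (0 : Ideal (𝓞 K)) := by
    rw [Ne, Ideal.zero_eq_bot, Ideal.span_singleton_eq_bot]; exact hc0
  refine ⟨k * M, ⟨Ideal.span {c'} * I, mem_nonZeroDivisors_of_ne_zero (mul_ne_zero hs0 hI0)⟩,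
    Nat.mul_pos hkpos hMpos, ?_, ?_⟩
  · simp only []
    rw [mul_pow, hb, Ideal.span_singleton_pow, Ideal.span_singleton_mul_span_singleton]
    congr 2
    push_cast
    linear_combination c' * hcb + k * hcc
  · rw [ClassGroup.mk0_eq_mk0_iff]
    exact ⟨1, c', one_ne_zero, hc0, by simp⟩

lemma GTData.kernel (D : GTData Δ α σ) (m : ℤ) (hmneg : m < 0)
    (hm : (Δ = m ∧ Δ % 4 = 1) ∨ (Δ = 4 * m ∧ (m % 4 = 2 ∨ m % 4 = 3)))
    (n : ℕ) (hn : Squarefree n) (hnΔ : (n : ℤ) ∣ Δ) (a : 𝓞 K)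
    (ha : Ideal.span {a} ^ 2 = Ideal.span {(n : 𝓞 K)}) :
    n = 1 ∨ n = m.natAbs ∨ Δ = -3 ∨ Δ = -4 := by
  obtain ⟨τ, y, N, h1, h2, h3⟩ := D.repr a
  have hn0 : n ≠ 0 := hn.ne_zero
  have hNn : N = n := by
    have e1 := D.absNorm a
    rw [h3] at e1
    have e2 := D.absNorm (n : 𝓞 K)
    rw [← ha, map_pow] at e2
    have e3 : (n : K) * n = ((Ideal.absNorm (Ideal.span {a}) ^ 2 : ℕ) : K) := by
      rw [← e2]; simp
    have e4 : n * n = Ideal.absNorm (Ideal.span {a}) ^ 2 := by exact_mod_cast e3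
    have e5 : n = Ideal.absNorm (Ideal.span {a}) := by
      rw [← pow_two] at e4
      exact (Nat.pow_left_injective two_ne_zero) e4
    rw [← e5] at e1
    exact_mod_cast e1
  subst hNn
  have hdv : (n : 𝓞 K) ∣ a ^ 2 := by
    rw [← Ideal.mem_span_singleton, ← ha, Ideal.span_singleton_pow]
    exact Ideal.mem_span_singleton_self _
  obtain ⟨w, hw⟩ := hdv
  obtain ⟨u', v', N', hu', -, -⟩ := D.repr w
  have hK : (a : K) ^ 2 = n * w := by
    have := congrArg (algebraMap (𝓞 K) K) hw
    simpa using this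
  have e : (((τ ^ 2 + Δ * y ^ 2 : ℤ) : K)) + ((2 * τ * y : ℤ) : K) * α
      = ((2 * n * u' : ℤ) : K) + ((2 * n * v' : ℤ) : K) * α := by
    push_cast
    have : (2 * (a : K)) ^ 2 = 2 * n * (2 * w) := by linear_combination 4 * hK
    rw [h1, hu'] at this
    linear_combination this - y ^ 2 * D.sq
  obtain ⟨e1, -⟩ := D.indep _ _ _ _ e
  have hτ : (n : ℤ) ∣ τ := by
    have h4 : (n : ℤ) ∣ τ ^ 2 := ⟨u' + 2, by linarith⟩
    exact ((Int.squarefree_natCast.2 hn).dvd_pow_iff_dvd two_ne_zero).1 h4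
  obtain ⟨x, rfl⟩ := hτ
  obtain ⟨k', hk'⟩ := hnΔ
  have hneg := D.neg
  have hnpos : (0 : ℤ) < n := by exact_mod_cast Nat.pos_of_ne_zero hn0
  obtain ⟨k, rfl⟩ : ∃ k, k' = -k := ⟨-k', by ring⟩
  have hkpos : 0 < k := by nlinarith
  have h5 : n * x ^ 2 + k * y ^ 2 = 4 := by
    have : (n : ℤ) * (n * x ^ 2 + k * y ^ 2) = n * 4 := by
      rw [hk'] at h2; linarith
    exact mul_left_cancel₀ hnpos.ne' this
  have hmod := gt_fund_mod D.fund
  by_cases hy : y = 0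
  · subst hy
    have hx : x ≠ 0 := by rintro rfl; omega
    have hx2 : 0 < x ^ 2 := by positivity
    have hn4 : n ≤ 4 := by
      have : (n : ℤ) ≤ 4 := by nlinarith
      exact_mod_cast this
    left
    have hxb : x.natAbs ^ 2 ≤ 4 := by
      zify; rw [sq_abs]; nlinarith
    have hx3 : x.natAbs ≤ 2 := by nlinarith
    have h6 : n * x.natAbs ^ 2 = 4 := by
      zify; rw [sq_abs]; linarith
    generalize x.natAbs = z at *
    interval_cases z <;> try omega
    have : n = 4 := by omega
    subst this
    exact absurd hn (by decide)
  · have hy2 : 0 < y ^ 2 := by positivity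
    by_cases hx : x = 0
    · subst hx
      right; left
      have hk4 : k ≤ 4 := by nlinarith
      have hxb : y.natAbs ^ 2 ≤ 4 := by
        zify; rw [sq_abs]; nlinarith
      have hx3 : y.natAbs ≤ 2 := by nlinarith
      have h6 : k * (y.natAbs : ℤ) ^ 2 = 4 := by
        zify; rw [sq_abs]; linarith
      have hk14 : k = 1 ∨ k = 4 := by
        generalize y.natAbs = z at *
        interval_cases z <;> push_cast at h6 <;> omega
      rcases hk14 with rfl | rfl
      · rcases hm with ⟨hm, _⟩ | ⟨hm, _⟩
        · omega
        · exfalso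
          have : 2 * 2 ∣ n := by omega
          have := Nat.isUnit_iff.1 (hn 2 this)
          omega
      · rcases hm with ⟨hm, _⟩ | ⟨hm, _⟩ <;> omega
    · have hx2 : 0 < x ^ 2 := by positivity
      have : n + k ≤ 4 := by nlinarith
      right; right
      have hn4 : (n : ℤ) ≤ 3 := by omega
      have hk3 : k ≤ 3 := by omega
      have hn4' : n ≤ 3 := by omega
      have hn1' : 1 ≤ n := by omega
      interval_cases n <;> interval_cases k <;> simp at hk' <;> omega

end

lemma gt_count {G : Type*} [CommGroup G] (T : Finset ℕ) (c : ℕ → G)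
    (hc : ∀ p ∈ T, c p ^ 2 = 1) (hsurj : ∀ g : G, g ^ 2 = 1 → ∃ S ⊆ T, ∏ p ∈ S, c p = g)
    (S0 : Finset ℕ) (hS0 : S0 ⊆ T) (hne : S0 ≠ ∅)
    (hker : ∀ S ⊆ T, ∏ p ∈ S, c p = 1 ↔ (S = ∅ ∨ S = S0)) :
    Nat.card {g : G // g ^ 2 = 1} * 2 = 2 ^ T.card := by
  classical
  let φ : Finset ℕ → G := fun S => ∏ p ∈ S, c p
  have hφsq : ∀ S ⊆ T, φ S ^ 2 = 1 := by
    intro S hS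
    change (∏ p ∈ S, c p) ^ 2 = 1
    rw [← Finset.prod_pow]
    exact Finset.prod_eq_one fun p hp => hc p (hS hp)
  have hmul : ∀ S ⊆ T, ∀ U ⊆ T, φ S * φ U = φ (symmDiff S U) := by
    intro S hS U hU
    have h1 : φ S = φ (S \ U) * φ (S ∩ U) := by
      change ∏ p ∈ S, c p = (∏ p ∈ S \ U, c p) * ∏ p ∈ S ∩ U, c p
      rw [mul_comm, Finset.prod_inter_mul_prod_sdiff]
    have h2 : φ U = φ (U \ S) * φ (S ∩ U) := by
      change ∏ p ∈ U, c p = (∏ p ∈ U \ S, c p) * ∏ p ∈ S ∩ U, c p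
      rw [mul_comm, Finset.inter_comm, Finset.prod_inter_mul_prod_sdiff]
    have h3 : φ (symmDiff S U) = φ (S \ U) * φ (U \ S) := by
      change ∏ p ∈ (S \ U) ∪ (U \ S), c p = _
      rw [Finset.prod_union (disjoint_sdiff_sdiff)]
    have h4 := hφsq (S ∩ U) (Finset.inter_subset_left.trans hS)
    rw [h1, h2, h3]
    calc _ = φ (S \ U) * φ (U \ S) * φ (S ∩ U) ^ 2 := by rw [sq]; exact mul_mul_mul_comm _ _ _ _
      _ = _ := by rw [h4, mul_one]
  have hsd : ∀ S ⊆ T, ∀ U ⊆ T, symmDiff S U ⊆ T := by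
    intro S hS U hU
    exact Finset.union_subset (Finset.sdiff_subset.trans hS) (Finset.sdiff_subset.trans hU)
  have hfib : ∀ S ⊆ T, ∀ U ⊆ T, φ U = φ S ↔ U = S ∨ U = symmDiff S S0 := by
    intro S hS U hU
    have h1 : φ U = φ S ↔ φ (symmDiff S U) = 1 := by
      rw [← hmul S hS U hU]
      have := hφsq S hS
      constructor
      · intro h; rw [h, ← sq, this]
      · intro h
        apply mul_left_cancel (a := φ S)
        rw [h, ← sq, this]
    rw [h1]
    refine (hker _ (hsd S hS U hU)).trans ?_
    constructor
    · rintro (h | h)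
      · left; exact (symmDiff_eq_bot.1 h).symm
      · right; rw [← h, symmDiff_symmDiff_cancel_left]
    · rintro (rfl | rfl)
      · left; exact symmDiff_self _
      · right; rw [symmDiff_symmDiff_cancel_left]
  have himg : Nat.card {g : G // g ^ 2 = 1} = (T.powerset.image φ).card := by
    apply Nat.subtype_card
    intro g
    rw [Finset.mem_image]
    constructor
    · rintro ⟨S, hS, rfl⟩
      exact hφsq S (Finset.mem_powerset.1 hS)
    · intro hg
      obtain ⟨S, hS, h⟩ := hsurj g hg
      exact ⟨S, Finset.mem_powerset.2 hS, h⟩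
  have hcount := Finset.card_eq_sum_card_image φ T.powerset
  rw [Finset.card_powerset] at hcount
  rw [hcount, himg]
  symm
  rw [← smul_eq_mul]
  apply Finset.sum_const_nat
  intro g hg
  obtain ⟨S, hS, rfl⟩ := Finset.mem_image.1 hg
  rw [Finset.mem_powerset] at hS
  have : {a ∈ T.powerset | φ a = φ S} = {S, symmDiff S S0} := by
    ext U
    simp only [Finset.mem_filter, Finset.mem_powerset, Finset.mem_insert, Finset.mem_singleton]
    constructor
    · rintro ⟨h1, h2⟩
      exact (hfib S hS U h1).1 h2
    · intro h
      have hU : U ⊆ T := by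
        rcases h with rfl | rfl
        · exact hS
        · exact hsd S hS S0 hS0
      exact ⟨hU, (hfib S hS U hU).2 h⟩
  rw [this, Finset.card_pair]
  intro h
  exact hne (symmDiff_eq_left.1 h.symm)

lemma gt_card_quot {G : Type*} [CommGroup G] [Finite G] :
    Nat.card (G ⧸ (powMonoidHom 2 : G →* G).range) = Nat.card {g : G // g ^ 2 = 1} := by
  have h1 := (powMonoidHom 2 : G →* G).ker.card_mul_index
  rw [Subgroup.index_ker] at h1
  have h2 := (powMonoidHom 2 : G →* G).range.card_mul_index
  have h3 : 0 < Nat.card (powMonoidHom 2 : G →* G).range := Nat.card_pos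
  have h4 : (powMonoidHom 2 : G →* G).range.index = Nat.card (powMonoidHom 2 : G →* G).ker := by
    apply Nat.eq_of_mul_eq_mul_left h3
    rw [h2, ← h1, mul_comm]
  rw [Subgroup.index] at h4
  rw [h4]
  exact Nat.card_congr (Equiv.subtypeEquivRight fun g => by
    rw [MonoidHom.mem_ker, powMonoidHom_apply])

lemma gt_primeFactors_prod {S : Finset ℕ} (hS : ∀ p ∈ S, p.Prime) :
    (∏ p ∈ S, p).primeFactors = S := Nat.primeFactors_prod hS

open nonZeroDivisors in
lemma GTData.main {K : Type} [Field K] [NumberField K] {Δ : ℤ} {α : K} {σ : K ≃ₐ[ℚ] K}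
    (D : GTData Δ α σ) :
    Nat.card {g : ClassGroup (𝓞 K) // g ^ 2 = 1} * 2 = 2 ^ Δ.natAbs.primeFactors.card := by
  classical
  obtain ⟨m, γ, hsf, hγ, hmneg, hm⟩ := D.exists_sqrt
  have hneg := D.neg
  have hΔ0 : Δ.natAbs ≠ 0 := by omega
  obtain ⟨T, hT⟩ : ∃ T, T = Δ.natAbs.primeFactors := ⟨_, rfl⟩
  have hTprime : ∀ p ∈ T, p.Prime := fun p hp => Nat.prime_of_mem_primeFactors (hT ▸ hp)
  have hTdvd : ∀ p ∈ T, (p : ℤ) ∣ Δ := fun p hp =>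
    Int.natCast_dvd.2 (Nat.dvd_of_mem_primeFactors (hT ▸ hp))
  have hTmem : ∀ p : ℕ, p.Prime → (p : ℤ) ∣ Δ → p ∈ T := fun p hp h => by
    rw [hT, Nat.mem_primeFactors]
    exact ⟨hp, Int.natCast_dvd.1 h, hΔ0⟩
  have hex : ∀ p : ℕ, ∃ P : (Ideal (𝓞 K))⁰, p ∈ T →
      (P : Ideal (𝓞 K)) ^ 2 = Ideal.span {(p : 𝓞 K)} := by
    intro p
    by_cases hp : p ∈ T
    · obtain ⟨P, hP⟩ := D.exists_ramified p (hTprime p hp) (hTdvd p hp)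
      refine ⟨⟨P, mem_nonZeroDivisors_of_ne_zero ?_⟩, fun _ => hP⟩
      rintro rfl
      rw [zero_pow two_ne_zero, Ideal.zero_eq_bot, eq_comm, Ideal.span_singleton_eq_bot] at hP
      exact (hTprime p hp).ne_zero (by exact_mod_cast hP)
    · exact ⟨1, fun h => absurd h hp⟩
  choose P hP using hex
  have hkey := gt_prod_eq_one_iff T P hP
  rw [← hT]
  have hSprime : ∀ S ⊆ T, ∀ p ∈ S, p.Prime := fun S hS p hp => hTprime p (hS hp)
  have hSsf : ∀ S ⊆ T, Squarefree (∏ p ∈ S, p) := by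
    intro S hS
    refine Finset.squarefree_prod_of_pairwise_isCoprime ?_ fun p hp =>
      (hSprime S hS p hp).prime.squarefree
    intro p hp q hq hpq
    exact Nat.coprime_iff_isRelPrime.1 ((Nat.coprime_primes (hSprime S hS p hp) (hSprime S hS q hq)).2 hpq)
  have hSdvd : ∀ S ⊆ T, ((∏ p ∈ S, p : ℕ) : ℤ) ∣ Δ := by
    intro S hS
    rw [Int.natCast_dvd]
    refine (Finset.prod_dvd_prod_of_subset _ _ _ hS).trans ?_
    rw [hT]
    exact Nat.prod_primeFactors_dvd _
  -- the nontrivial relation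
  obtain ⟨S0, hS0, hne, hS0p, hm1, hm2, hm3⟩ : ∃ S0 ⊆ T, S0 ≠ ∅ ∧
      (∃ a : 𝓞 K, Ideal.span {a} ^ 2 = Ideal.span {((∏ p ∈ S0, p : ℕ) : 𝓞 K)}) ∧
      (m = -1 ∨ m.natAbs.primeFactors = S0) ∧ (Δ = -3 → S0 = T) ∧ (Δ = -4 → S0 = T) := by
    by_cases hm1 : m = -1
    · have hΔ4 : Δ = -4 := by omega
      have hT2 : T = {2} := by
        rw [hT, hΔ4]
        change (4 : ℕ).primeFactors = {2}
        rw [show (4 : ℕ) = 2 ^ 2 by norm_num, Nat.primeFactors_prime_pow two_ne_zero Nat.prime_two]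
      refine ⟨{2}, by rw [hT2], by simp, ⟨1 + γ, ?_⟩, Or.inl hm1, by omega, fun _ => hT2.symm⟩
      rw [Ideal.span_singleton_pow, Finset.prod_singleton, Ideal.span_singleton_eq_span_singleton]
      have hγ1 : γ * γ = -1 := by rw [← pow_two, hγ, hm1]; simp
      have hu : IsUnit (-γ) := IsUnit.of_mul_eq_one γ (by rw [neg_mul, hγ1, neg_neg])
      refine ⟨hu.unit, ?_⟩
      rw [IsUnit.unit_spec]
      push_cast
      linear_combination (-2 - γ) * hγ1
    · have hmT : m.natAbs.primeFactors ⊆ T := by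
        rw [hT]
        apply Nat.primeFactors_mono _ hΔ0
        rw [Int.natAbs_dvd_natAbs]
        rcases hm with ⟨h, _⟩ | ⟨h, _⟩
        · rw [h]
        · rw [h]; exact Dvd.intro_left _ rfl
      refine ⟨m.natAbs.primeFactors, hmT, ?_, ⟨γ, ?_⟩, Or.inr rfl, ?_, ?_⟩
      · rw [Ne, Nat.primeFactors_eq_empty]
        omega
      · rw [Nat.prod_primeFactors_of_squarefree (Int.squarefree_natAbs.2 hsf),
          Ideal.span_singleton_pow, hγ]
        have : (m : 𝓞 K) = -((m.natAbs : ℕ) : 𝓞 K) := by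
          have : m = -(m.natAbs : ℤ) := by omega
          conv_lhs => rw [this]
          rw [Int.cast_neg, Int.cast_natCast]
        rw [this, Ideal.span_singleton_neg]
      · intro h
        have : Δ = m := by omega
        rw [hT, this]
      · intro h
        omega
  refine gt_count T (fun p => ClassGroup.mk0 (P p)) ?_ ?_ S0 hS0 hne ?_
  · intro p hp
    have h := (hkey {p} (by simpa using hp)).1
    rw [Finset.prod_singleton, Finset.prod_singleton] at h
    rw [← map_pow]
    have e : P p ^ 2 = ⟨(P p : Ideal (𝓞 K)) ^ 2, pow_mem (P p).2 2⟩ :=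
      Subtype.ext (SubmonoidClass.coe_pow (P p) 2)
    rw [e, ClassGroup.mk0_eq_one_iff, h]
    exact ⟨_, rfl⟩
  · intro g hg
    obtain ⟨n0, J0, hn0, hJ0, rfl⟩ := D.two_torsion g hg
    obtain ⟨n, J, hnsf, hnΔ, hJ, hJJ⟩ := D.reduce n0 hn0 J0 hJ0
    have hST : n.primeFactors ⊆ T := fun p hp =>
      hTmem p (Nat.prime_of_mem_primeFactors hp)
        (hnΔ p (Nat.prime_of_mem_primeFactors hp) (Nat.dvd_of_mem_primeFactors hp))
    refine ⟨n.primeFactors, hST, ?_⟩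
    have h := (hkey _ hST).1
    rw [Nat.prod_primeFactors_of_squarefree hnsf] at h
    rw [hJJ, ← map_prod]
    congr 1
    exact Subtype.ext (gt_sq_inj (h.trans hJ.symm))
  · intro S hS
    rw [(hkey S hS).2]
    constructor
    · rintro ⟨a, ha⟩
      have hpf := gt_primeFactors_prod (hSprime S hS)
      have hTcard : ∀ q : ℕ, T = {q} → S0 = T → S = ∅ ∨ S = S0 := by
        intro q hq h0
        rw [h0, hq]
        exact Finset.subset_singleton_iff.1 (hq ▸ hS)
      rcases D.kernel m hmneg hm _ (hSsf S hS) (hSdvd S hS) a ha with h | h | h | h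
      · left
        rw [← hpf, h, Nat.primeFactors_one]
      · rw [h] at hpf
        rcases hm1 with h1 | h1
        · left
          rw [← hpf, h1]
          simp
        · right
          rw [← hpf, h1]
      · refine hTcard 3 ?_ (hm2 h)
        rw [hT, h]
        exact Nat.Prime.primeFactors Nat.prime_three
      · refine hTcard 2 ?_ (hm3 h)
        rw [hT, h]
        change (4 : ℕ).primeFactors = {2}
        rw [show (4 : ℕ) = 2 ^ 2 by norm_num, Nat.primeFactors_prime_pow two_ne_zero Nat.prime_two]
    · rintro (rfl | rfl)
      · exact ⟨1, by simp⟩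
      · exact hS0p


/-- Let `Δ < 0` be a fundamental discriminant, `K = ℚ(√Δ)` (formalized as any degree-2
number field containing a square root of `Δ`), and let `t` be the number of distinct prime
divisors of `Δ` (equivalently, the number of prime discriminants in the factorization of
`Δ`). Then the quotient `Cl(K)/Cl(K)²` of the ideal class group of `K` by its subgroup of
squares has order `2^(t−1)`. -/
theorem card_classGroup_quotient_squares
    (Δ : ℤ) (hΔ : IsFundamentalDiscriminant Δ) (hneg : Δ < 0)
    (K : Type) [Field K] [NumberField K]
    (hdeg : Module.finrank ℚ K = 2)
    (α : K) (hα : α ^ 2 = (Δ : K))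
    (t : ℕ) (ht : t = Δ.natAbs.primeFactors.card) :
    Nat.card
      (ClassGroup (𝓞 K) ⧸
        (powMonoidHom 2 : ClassGroup (𝓞 K) →* ClassGroup (𝓞 K)).range) = 2 ^ (t - 1) := by
  obtain ⟨σ, h1, h2, h3⟩ := gt_exists_conj Δ hneg hdeg α hα
  have D : GTData Δ α σ := ⟨hΔ, hneg, hα, h1, h2, h3⟩
  rw [gt_card_quot]
  have h := D.main
  rw [← ht] at h
  cases t with
  | zero => omega
  | succ t =>
    rw [pow_succ] at h
    rw [Nat.add_sub_cancel]
    exact Nat.eq_of_mul_eq_mul_right two_pos h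
end

section
/- (Principal Genus Theorem for imaginary quadratic fields) Let Δ < 0 be a fundamental discriminant with factorization Δ = Δ₁ ⋯ Δ_t into prime discriminants, and let K = ℚ(√Δ). An ideal class c in the ideal class group Cl(K) is a square if and only if for every nonzero ideal 𝔞 of O_K belonging to c and coprime to Δ, the Kronecker symbols (Δ_j / N𝔞) equal 1 for all j = 1, …, t, where N𝔞 denotes the absolute norm of 𝔞. -/
open NumberField nonZeroDivisors

/-- A prime discriminant is a fundamental discriminant having exactly one prime factor. -/
def IsPrimeDiscriminant (Δ : ℤ) : Prop :=
  IsFundamentalDiscriminant Δ ∧ Δ.natAbs.primeFactors.card = 1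

/-- The Kronecker symbol `(a/b)` for a positive integer `b`: it is the Jacobi symbol on the
odd part of `b`, extended multiplicatively to the prime `2` via the character `χ₈`
(so `(a/2) = 0, 1, −1` according as `a` is even, `a ≡ ±1 (mod 8)`, `a ≡ ±3 (mod 8)`). -/
noncomputable def kroneckerSym (a : ℤ) (b : ℕ) : ℤ :=
  (ZMod.χ₈ (a : ZMod 8)) ^ (b.factorization 2) * jacobiSym a (b / 2 ^ (b.factorization 2))


theorem pg_legendre_aux (b c x y z : ℤ) (hbp : 0 < b) (hne : ¬ (x = 0 ∧ y = 0 ∧ z = 0))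
    (hk : x ^ 2 + b * y ^ 2 - c * z ^ 2 = 0 ∨ x ^ 2 + b * y ^ 2 - c * z ^ 2 = b * c) :
    ∃ x y z : ℤ, z ≠ 0 ∧ x ^ 2 + b * y ^ 2 = c * z ^ 2 := by
  rcases hk with hk | hk
  · refine ⟨x, y, z, ?_, by linarith⟩
    rintro rfl
    apply hne
    have p1 := sq_nonneg x
    have p2 := mul_nonneg hbp.le (sq_nonneg y)
    have e1 : x ^ 2 = 0 := by linarith
    have e2 : b * y ^ 2 = 0 := by linarith
    refine ⟨by simpa using e1, ?_, rfl⟩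
    rcases mul_eq_zero.1 e2 with h | h
    · omega
    · simpa using h
  · refine ⟨x * z + b * y, y * z - x, z ^ 2 + b, by positivity, ?_⟩
    linear_combination (z ^ 2 + b) * hk

theorem pg_legendre (b c : ℕ) (hb : 0 < b) (hc : 0 < c) (hbc : Nat.Coprime b c)
    (hbs : b = 1 ∨ ¬ IsSquare b) (r s : ℤ) (hr : (c : ℤ) ∣ r ^ 2 + b) (hs : (b : ℤ) ∣ s ^ 2 - c) :
    ∃ x y z : ℤ, z ≠ 0 ∧ x ^ 2 + b * y ^ 2 = c * z ^ 2 := by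
  by_cases hcs : IsSquare c
  · obtain ⟨k, rfl⟩ := hcs
    exact ⟨k, 0, 1, one_ne_zero, by push_cast; ring⟩
  rcases hbs with rfl | hbs
  · have : IsSquare (-1 : ZMod c) := by
      refine ⟨(r : ZMod c), ?_⟩
      have h := (ZMod.intCast_zmod_eq_zero_iff_dvd _ c).2 hr
      push_cast at h
      linear_combination -h
    obtain ⟨x, y, h⟩ := Nat.eq_sq_add_sq_of_isSquare_mod_neg_one this
    exact ⟨x, y, 1, one_ne_zero, by rw [h]; push_cast; ring⟩
  have : NeZero b := ⟨hb.ne'⟩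
  have : NeZero c := ⟨hc.ne'⟩
  set A := Nat.sqrt (b * c)
  set B := Nat.sqrt c
  set C := Nat.sqrt b
  let f : Fin (A + 1) × Fin (B + 1) × Fin (C + 1) → ZMod b × ZMod c := fun t =>
    (((t.1 : ℕ) : ZMod b) - (s : ZMod b) * ((t.2.2 : ℕ) : ZMod b),
      ((t.1 : ℕ) : ZMod c) - (r : ZMod c) * ((t.2.1 : ℕ) : ZMod c))
  have hA1 : b * c < (A + 1) * (A + 1) := Nat.lt_succ_sqrt _
  have hB1 : c < (B + 1) * (B + 1) := Nat.lt_succ_sqrt _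
  have hC1 : b < (C + 1) * (C + 1) := Nat.lt_succ_sqrt _
  have hA2 : A * A ≤ b * c := Nat.sqrt_le _
  have hB2 : B * B ≤ c := Nat.sqrt_le _
  have hC2 : C * C ≤ b := Nat.sqrt_le _
  have hcard : Fintype.card (ZMod b × ZMod c) < Fintype.card (Fin (A + 1) × Fin (B + 1) × Fin (C + 1)) := by
    simp only [Fintype.card_prod, ZMod.card, Fintype.card_fin]
    refine lt_of_pow_lt_pow_left₀ 2 (Nat.zero_le _) ?_
    have h1 : c * b < ((B + 1) * (B + 1)) * ((C + 1) * (C + 1)) := Nat.mul_lt_mul'' hB1 hC1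
    have h2 := Nat.mul_lt_mul'' hA1 h1
    calc (b * c) ^ 2 = b * c * (c * b) := by ring
      _ < _ := h2
      _ = _ := by ring
  obtain ⟨⟨x1, y1, z1⟩, ⟨x2, y2, z2⟩, hne, heq⟩ := Fintype.exists_ne_map_eq_of_card_lt f hcard
  simp only [f, Prod.mk.injEq] at heq
  obtain ⟨h1, h2⟩ := heq
  have bd : ∀ (M : ℕ) (u v : Fin (M + 1)), (((u : ℕ) : ℤ) - ((v : ℕ) : ℤ)) ^ 2 ≤ M * M := by
    intro M u v
    have hu := u.2
    have hv := v.2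
    have : |(((u : ℕ) : ℤ) - ((v : ℕ) : ℤ))| ≤ M := by rw [abs_le]; omega
    rw [← sq_abs]
    have h0 := abs_nonneg (((u : ℕ) : ℤ) - ((v : ℕ) : ℤ))
    nlinarith
  have hx := bd A x1 x2
  have hy := bd B y1 y2
  have hz := bd C z1 z2
  set x : ℤ := ((x1 : ℕ) : ℤ) - ((x2 : ℕ) : ℤ) with hxd
  set y : ℤ := ((y1 : ℕ) : ℤ) - ((y2 : ℕ) : ℤ) with hyd
  set z : ℤ := ((z1 : ℕ) : ℤ) - ((z2 : ℕ) : ℤ) with hzd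
  have hne' : ¬ (x = 0 ∧ y = 0 ∧ z = 0) := by
    rintro ⟨hx0, hy0, hz0⟩
    apply hne
    have e1 : x1 = x2 := by apply Fin.ext; omega
    have e2 : y1 = y2 := by apply Fin.ext; omega
    have e3 : z1 = z2 := by apply Fin.ext; omega
    rw [e1, e2, e3]
  have d1 : (b : ℤ) ∣ x - s * z := by
    rw [← ZMod.intCast_zmod_eq_zero_iff_dvd]
    rw [hxd, hzd]; push_cast
    linear_combination h1
  have d2 : (c : ℤ) ∣ x - r * y := by
    rw [← ZMod.intCast_zmod_eq_zero_iff_dvd]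
    rw [hxd, hyd]; push_cast
    linear_combination h2
  have dV : ((b : ℤ) * c) ∣ x ^ 2 + b * y ^ 2 - c * z ^ 2 := by
    apply IsCoprime.mul_dvd (Nat.isCoprime_iff_coprime.2 hbc)
    · have : x ^ 2 + b * y ^ 2 - c * z ^ 2 = (x - s * z) * (x + s * z) + (s ^ 2 - c) * z ^ 2 + b * y ^ 2 := by ring
      rw [this]
      exact dvd_add (dvd_add (d1.mul_right _) (hs.mul_right _)) (dvd_mul_right _ _)
    · have : x ^ 2 + b * y ^ 2 - c * z ^ 2 = (x - r * y) * (x + r * y) + (r ^ 2 + b) * y ^ 2 - c * z ^ 2 := by ring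
      rw [this]
      exact dvd_sub (dvd_add (d2.mul_right _) (hr.mul_right _)) (dvd_mul_right _ _)
  zify at hA2 hB2 hC2
  have sqn : ∀ (N : ℕ) (t : ℤ), ¬ IsSquare N → t ^ 2 ≠ N := by
    intro N t hN h
    apply hN
    refine ⟨t.natAbs, ?_⟩
    zify
    rw [abs_mul_abs_self, ← h]; ring
  have hy' : y ^ 2 < c := lt_of_le_of_ne (hy.trans hB2) (sqn _ _ hcs)
  have hz' : z ^ 2 < b := lt_of_le_of_ne (hz.trans hC2) (sqn _ _ hbs)
  have hx' : x ^ 2 ≤ b * c := hx.trans hA2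
  have hbp : (0 : ℤ) < b := by exact_mod_cast hb
  have hcp : (0 : ℤ) < c := by exact_mod_cast hc
  obtain ⟨k, hk⟩ := dV
  have hbcp : (0 : ℤ) < b * c := by positivity
  have k1 : k < 2 := by
    have : (b : ℤ) * c * k < b * c * 2 := by rw [← hk]; nlinarith [sq_nonneg z]
    exact lt_of_mul_lt_mul_left this hbcp.le
  have k2 : -1 < k := by
    have : (b : ℤ) * c * (-1) < b * c * k := by rw [← hk]; nlinarith [sq_nonneg x, sq_nonneg y]
    exact lt_of_mul_lt_mul_left this hbcp.le
  have hk' : x ^ 2 + b * y ^ 2 - c * z ^ 2 = 0 ∨ x ^ 2 + b * y ^ 2 - c * z ^ 2 = b * c := by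
    obtain rfl | rfl : k = 0 ∨ k = 1 := by omega
    · left; rw [hk]; ring
    · right; rw [hk]; ring
  exact pg_legendre_aux b c x y z hbp hne' hk'

theorem pg_crt (n : ℤ) (b : ℕ) (hb : Squarefree b)
    (h : ∀ p : ℕ, p.Prime → p ∣ b → ∃ s : ℤ, (p : ℤ) ∣ s ^ 2 - n) :
    ∃ s : ℤ, (b : ℤ) ∣ s ^ 2 - n := by
  induction b using Nat.recOnPosPrimePosCoprime with
  | prime_pow p k hp hk =>
    have hk1 : k = 1 := by
      rcases Nat.squarefree_pow_iff hp.ne_one hk.ne' |>.1 hb with ⟨_, h⟩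
      exact h
    subst hk1
    obtain ⟨s, hs⟩ := h p hp (by simp)
    exact ⟨s, by simpa using hs⟩
  | zero => exact absurd hb not_squarefree_zero
  | one => exact ⟨0, by simp⟩
  | coprime a b ha hb' hab iha ihb =>
    obtain ⟨s, hs⟩ := iha (hb.squarefree_of_dvd (dvd_mul_right _ _)) (fun p hp hpa => h p hp (hpa.mul_right _))
    obtain ⟨t, ht⟩ := ihb (hb.squarefree_of_dvd (dvd_mul_left _ _)) (fun p hp hpa => h p hp (hpa.mul_left _))
    have hc : IsCoprime (a : ℤ) b := Nat.isCoprime_iff_coprime.2 hab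
    obtain ⟨u, v, huv⟩ := id hc
    refine ⟨s + (u * a) * (t - s), ?_⟩
    push_cast
    apply IsCoprime.mul_dvd hc
    · have : (s + (u * a) * (t - s)) ^ 2 - n = (s ^ 2 - n) + a * (2 * s * u * (t - s) + u ^ 2 * a * (t - s) ^ 2) := by ring
      rw [this]; exact dvd_add hs (dvd_mul_right _ _)
    · have e : u * a = 1 - v * b := by linear_combination huv
      have : (s + (u * a) * (t - s)) ^ 2 - n = (t ^ 2 - n) + b * (- 2 * t * v * (t - s) + v ^ 2 * b * (t - s) ^ 2) := by rw [e]; ring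
      rw [this]; exact dvd_add ht (dvd_mul_right _ _)

/-- odd prime discriminants -/
theorem pg_pd_odd (d : ℤ) (h : IsPrimeDiscriminant d) (hodd : d % 2 = 1) :
    d.natAbs.Prime ∧ d % 4 = 1 := by
  obtain ⟨⟨_, h1 | ⟨m, rfl, _⟩⟩, hc⟩ := h
  · refine ⟨?_, h1.1⟩
    obtain ⟨p, hp⟩ := Finset.card_eq_one.1 hc
    have hsq : Squarefree d.natAbs := Int.squarefree_natAbs.2 h1.2
    have := Nat.prod_primeFactors_of_squarefree hsq
    rw [hp] at this
    simp at this
    rw [← this]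
    exact Nat.prime_of_mem_primeFactors (n := d.natAbs) (by rw [hp]; simp)
  · omega

theorem pg_pd_even (d : ℤ) (h : IsPrimeDiscriminant d) (heven : d % 2 = 0) :
    d = -4 ∨ d = 8 ∨ d = -8 := by
  obtain ⟨⟨_, h1 | ⟨m, rfl, hm, h2⟩⟩, hc⟩ := h
  · omega
  · have hm0 : m ≠ 0 := hm.ne_zero
    obtain ⟨p, hp⟩ := Finset.card_eq_one.1 hc
    have hsq : Squarefree m.natAbs := Int.squarefree_natAbs.2 hm
    have h2m : 2 ∈ (4 * m).natAbs.primeFactors := by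
      simp only [Nat.mem_primeFactors]
      refine ⟨Nat.prime_two, by omega, by omega⟩
    have hp2 : p = 2 := by rw [hp] at h2m; simpa [eq_comm] using h2m
    subst hp2
    have hsub : m.natAbs.primeFactors ⊆ {2} := by
      rw [← hp]
      apply Nat.primeFactors_mono
      · rw [Int.natAbs_mul]; exact dvd_mul_left _ _
      · omega
    have := Nat.prod_primeFactors_of_squarefree hsq
    rcases Finset.subset_singleton_iff.1 hsub with h | h <;> rw [h] at this <;> simp at this <;> omega

theorem pg_kron_odd (d : ℤ) (hd : d % 4 = 1) (n : ℕ) (hn : 0 < n) :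
    kroneckerSym d n = jacobiSym n d.natAbs := by
  unfold kroneckerSym
  set v := n.factorization 2
  set k := n / 2 ^ v with hk
  have hnk : n = 2 ^ v * k := (Nat.ordProj_mul_ordCompl_eq_self n 2).symm
  have hkodd : Odd k := by
    rw [← Nat.not_even_iff_odd, even_iff_two_dvd]
    exact Nat.not_dvd_ordCompl Nat.prime_two hn.ne'
  have hdodd : Odd d.natAbs := by rw [Nat.odd_iff]; omega
  have hJ : jacobiSym d k = jacobiSym k d.natAbs := by
    rcases Int.natAbs_eq d with h | h
    · conv_lhs => rw [h]
      exact jacobiSym.quadratic_reciprocity_one_mod_four (by omega) hkodd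
    · conv_lhs => rw [h]
      rw [jacobiSym.neg _ hkodd]
      have h3 : d.natAbs % 4 = 3 := by omega
      rcases Nat.odd_mod_four_iff.1 (Nat.odd_iff.1 hkodd) with hk1 | hk3
      · rw [ZMod.χ₄_nat_one_mod_four hk1, one_mul]
        exact jacobiSym.quadratic_reciprocity_one_mod_four' hdodd hk1
      · rw [ZMod.χ₄_nat_three_mod_four hk3, jacobiSym.quadratic_reciprocity_three_mod_four h3 hk3]
        ring
  have h2 : ZMod.χ₈ (d : ZMod 8) = jacobiSym 2 d.natAbs := by
    rw [jacobiSym.at_two hdodd]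
    rcases Int.natAbs_eq d with h | h
    · conv_lhs => rw [h]
      simp
    · conv_lhs => rw [h]
      rw [Int.cast_neg, Int.cast_natCast]
      generalize ((d.natAbs : ℕ) : ZMod 8) = t
      revert t; decide
  rw [hJ, h2, ← jacobiSym.pow_left, ← jacobiSym.mul_left]
  congr 1
  rw [hnk]; push_cast; rfl

theorem pg_kron_even (d : ℤ) (n : ℕ) (hn : n % 2 = 1) :
    kroneckerSym d n = jacobiSym d n := by
  unfold kroneckerSym
  have : n.factorization 2 = 0 := Nat.factorization_eq_zero_of_not_dvd (by omega)
  simp [this]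

theorem pg_descent (p : ℤ) (hp : 1 < p) (n m : ℤ)
    (H : ∀ X Y w : ℤ, n * w ^ 2 = X ^ 2 - m * Y ^ 2 → p ∣ w → p ∣ X ∧ p ∣ Y) :
    ∀ (N : ℕ) (X Y w : ℤ), w.natAbs ≤ N → w ≠ 0 → n * w ^ 2 = X ^ 2 - m * Y ^ 2 →
      ∃ X' Y' w' : ℤ, n * w' ^ 2 = X' ^ 2 - m * Y' ^ 2 ∧ ¬ p ∣ w' := by
  intro N
  induction N with
  | zero => intro X Y w h1 h2; omega
  | succ N ih =>
    intro X Y w h1 h2 h3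
    by_cases hw : p ∣ w
    · obtain ⟨⟨X', rfl⟩, ⟨Y', rfl⟩⟩ := H X Y w h3 hw
      obtain ⟨w', rfl⟩ := hw
      have hw' : w' ≠ 0 := by rintro rfl; simp at h2
      refine ih X' Y' w' ?_ hw' ?_
      · rw [Int.natAbs_mul] at h1
        have : 2 ≤ p.natAbs := by omega
        have : 0 < w'.natAbs := by omega
        nlinarith
      · have hp2 : p ^ 2 ≠ 0 := by positivity
        apply mul_left_cancel₀ hp2
        linear_combination h3
    · exact ⟨X, Y, w, h3, hw⟩

theorem pg_fund_sq (Δ : ℤ) (hΔ : IsFundamentalDiscriminant Δ) (p : ℕ) (hp : p.Prime) (hp2 : p ≠ 2) :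
    ¬ (p : ℤ) ^ 2 ∣ Δ := by
  intro h
  have hpi : Prime (p : ℤ) := Nat.prime_iff_prime_int.1 hp
  rcases hΔ with ⟨_, h1 | ⟨m, rfl, hm, _⟩⟩
  · exact hpi.not_isUnit (h1.2 p (by rwa [← sq]))
  · have hc : IsCoprime ((p : ℤ) ^ 2) (4 : ℤ) := by
      have : Nat.Coprime (p ^ 2) (2 ^ 2) := Nat.Coprime.pow _ _ ((Nat.coprime_primes hp Nat.prime_two).2 hp2)
      have := Nat.isCoprime_iff_coprime.2 this
      simpa using this
    exact hpi.not_isUnit (hm p (by rw [← sq]; exact hc.dvd_of_dvd_mul_left h))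

theorem pg_fwd_odd (p : ℕ) (hp : p.Prime) (hp2 : p ≠ 2) (Δ : ℤ) (h1 : (p : ℤ) ∣ Δ)
    (h2 : ¬ (p : ℤ) ^ 2 ∣ Δ) (n : ℤ) (hn : ¬ (p : ℤ) ∣ n) (X Y w : ℤ) (hw : w ≠ 0)
    (h : n * w ^ 2 = X ^ 2 - Δ * Y ^ 2) : jacobiSym n p = 1 := by
  have hpi : Prime (p : ℤ) := Nat.prime_iff_prime_int.1 hp
  obtain ⟨X', Y', w', h', hw'⟩ := pg_descent p (by exact_mod_cast hp.one_lt) n Δ (by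
    intro X Y w h hw
    have hX : (p : ℤ) ∣ X := by
      apply hpi.dvd_of_dvd_pow (n := 2)
      have : X ^ 2 = n * w ^ 2 + Δ * Y ^ 2 := by linarith
      rw [this]
      exact dvd_add ((hw.pow two_ne_zero).mul_left _) (h1.mul_right _)
    refine ⟨hX, ?_⟩
    by_contra hY
    apply h2
    have h3 : (p : ℤ) ^ 2 ∣ Δ * Y ^ 2 := by
      have : Δ * Y ^ 2 = X ^ 2 - n * w ^ 2 := by linarith
      rw [this]
      exact dvd_sub (pow_dvd_pow_of_dvd hX 2) ((pow_dvd_pow_of_dvd hw 2).mul_left _)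
    exact hpi.pow_dvd_of_dvd_mul_right 2 (fun h => hY (hpi.dvd_of_dvd_pow h)) h3) _ X Y w le_rfl hw h
  have hX' : ¬ (p : ℤ) ∣ X' := by
    intro hX
    have : (p : ℤ) ∣ n * w' ^ 2 := by
      rw [h']
      exact dvd_sub (hX.pow two_ne_zero) (h1.mul_right _)
    rcases hpi.dvd_or_dvd this with h | h
    · exact hn h
    · exact hw' (hpi.dvd_of_dvd_pow h)
  have cop : ∀ t : ℤ, ¬ (p : ℤ) ∣ t → t.gcd p = 1 := by
    intro t ht
    rw [Int.gcd_comm, ← Int.isCoprime_iff_gcd_eq_one]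
    exact (Prime.coprime_iff_not_dvd hpi).2 ht
  have e1 : jacobiSym (n * w' ^ 2) p = jacobiSym (X' ^ 2) p := by
    apply jacobiSym.mod_left'
    rw [h']
    apply Int.ModEq.symm
    rw [Int.modEq_iff_dvd]
    exact ⟨-((Δ / p) * Y' ^ 2), by obtain ⟨q, rfl⟩ := h1; rw [Int.mul_ediv_cancel_left _ hpi.ne_zero]; ring⟩
  rw [jacobiSym.mul_left, jacobiSym.sq_one' (cop _ hw'), jacobiSym.sq_one' (cop _ hX'), mul_one] at e1
  exact e1

theorem pg_fwd_even (m n X Y w : ℤ) (hm : m % 4 = 2 ∨ m % 4 = 3) (hw : w ≠ 0)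
    (h : n * w ^ 2 = X ^ 2 - m * Y ^ 2) :
    ∃ X' Y' : ℤ, n % 8 = (X' ^ 2 - m * Y' ^ 2) % 8 := by
  obtain ⟨X', Y', w', h', hw'⟩ := pg_descent 2 (by norm_num) n m (by
    rintro X Y w h ⟨w, rfl⟩
    have h4 : (X ^ 2 - m * Y ^ 2) % 4 = 0 := by
      rw [← h]; ring_nf; omega
    rw [Int.sub_emod, Int.mul_emod, pow_two, pow_two, Int.mul_emod X, Int.mul_emod Y] at h4
    have hX : X % 4 = 0 ∨ X % 4 = 1 ∨ X % 4 = 2 ∨ X % 4 = 3 := by omega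
    have hY : Y % 4 = 0 ∨ Y % 4 = 1 ∨ Y % 4 = 2 ∨ Y % 4 = 3 := by omega
    rcases hX with h1 | h1 | h1 | h1 <;> rcases hY with h2 | h2 | h2 | h2 <;>
      rcases hm with h3 | h3 <;> rw [h1, h2, h3] at h4 <;> omega) _ X Y w le_rfl hw h
  refine ⟨X', Y', ?_⟩
  rw [← h', Int.mul_emod]
  have : w' ^ 2 % 8 = 1 := by
    have hX : w' % 8 = 1 ∨ w' % 8 = 3 ∨ w' % 8 = 5 ∨ w' % 8 = 7 := by omega
    rcases hX with h1 | h1 | h1 | h1 <;> simp [pow_two, Int.mul_emod, h1]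
  rw [this]; simp

theorem pg_prod_mod (S : Finset ℤ) (h : ∀ d ∈ S, d % 4 = 1) : (∏ d ∈ S, d) % 4 = 1 := by
  induction S using Finset.induction_on with
  | empty => simp
  | insert a s ha ih =>
    rw [Finset.prod_insert ha, Int.mul_emod, h a (by simp), ih (fun d hd => h d (by simp [hd]))]
    norm_num

theorem pg_fwd (Δ : ℤ) (hΔ : IsFundamentalDiscriminant Δ)
    (S : Finset ℤ) (hS : ∀ d ∈ S, IsPrimeDiscriminant d) (hprod : (∏ d ∈ S, d) = Δ)
    (n : ℕ) (hn : 0 < n) (hcop : IsCoprime (n : ℤ) Δ) (X Y w : ℤ) (hw : w ≠ 0)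
    (h : n * w ^ 2 = X ^ 2 - Δ * Y ^ 2) : ∀ d ∈ S, kroneckerSym d n = 1 := by
  intro d hd
  have hdΔ : d ∣ Δ := by rw [← hprod]; exact Finset.dvd_prod_of_mem _ hd
  have hcd : IsCoprime (n : ℤ) d := hcop.of_isCoprime_of_dvd_right hdΔ
  rcases Int.emod_two_eq_zero_or_one d with h0 | h1
  · have hd4 : (4 : ℤ) ∣ d := by
      rcases pg_pd_even d (hS d hd) h0 with rfl | rfl | rfl <;> decide
    obtain ⟨m, hm, hm'⟩ : ∃ m : ℤ, Δ = 4 * m ∧ (m % 4 = 2 ∨ m % 4 = 3) := by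
      rcases hΔ with ⟨_, h1 | ⟨m, hm, _, hm'⟩⟩
      · have := hd4.trans hdΔ; omega
      · exact ⟨m, hm, hm'⟩
    have hr := Finset.mul_prod_erase S (fun d => d) hd
    rw [hprod] at hr
    have hr4 : (∏ x ∈ S.erase d, x) % 4 = 1 := by
      apply pg_prod_mod
      intro e he
      have heS := Finset.mem_of_mem_erase he
      rcases Int.emod_two_eq_zero_or_one e with e0 | e1
      · exfalso
        have he4 : (4 : ℤ) ∣ e := by
          rcases pg_pd_even e (hS e heS) e0 with rfl | rfl | rfl <;> decide
        have : (4 * 4 : ℤ) ∣ Δ := by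
          rw [← hr]
          exact mul_dvd_mul hd4 (he4.trans (Finset.dvd_prod_of_mem (fun x => x) he))
        omega
      · exact (pg_pd_odd e (hS e heS) e1).2
    set R := ∏ x ∈ S.erase d, x
    have hnodd : n % 2 = 1 := by
      by_contra hne
      have : IsUnit (2 : ℤ) := hcd.isUnit_of_dvd' (by omega) (by omega)
      exact absurd this (by decide)
    have hodd : Odd n := Nat.odd_iff.2 hnodd
    obtain ⟨X', Y', h8⟩ := pg_fwd_even m n X (2 * Y) w hm' hw (by rw [h, hm]; ring)
    rw [pg_kron_even _ _ hnodd]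
    have hXX : X' ^ 2 % 8 = 0 ∨ X' ^ 2 % 8 = 1 ∨ X' ^ 2 % 8 = 4 := by
      have hX : X' % 8 = 0 ∨ X' % 8 = 1 ∨ X' % 8 = 2 ∨ X' % 8 = 3 ∨ X' % 8 = 4 ∨ X' % 8 = 5 ∨ X' % 8 = 6 ∨ X' % 8 = 7 := by omega
      rcases hX with h1 | h1 | h1 | h1 | h1 | h1 | h1 | h1 <;> simp [pow_two, Int.mul_emod, h1]
    have hYY : Y' ^ 2 % 8 = 0 ∨ Y' ^ 2 % 8 = 1 ∨ Y' ^ 2 % 8 = 4 := by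
      have hX : Y' % 8 = 0 ∨ Y' % 8 = 1 ∨ Y' % 8 = 2 ∨ Y' % 8 = 3 ∨ Y' % 8 = 4 ∨ Y' % 8 = 5 ∨ Y' % 8 = 6 ∨ Y' % 8 = 7 := by omega
      rcases hX with h1 | h1 | h1 | h1 | h1 | h1 | h1 | h1 <;> simp [pow_two, Int.mul_emod, h1]
    rw [Int.sub_emod, Int.mul_emod] at h8
    rcases pg_pd_even d (hS d hd) h0 with rfl | rfl | rfl
    · have hm4 : m % 8 = 3 ∨ m % 8 = 7 := by omega
      have : n % 4 = 1 := by
        rcases hXX with h1 | h1 | h1 <;> rcases hYY with h2 | h2 | h2 <;> rcases hm4 with h3 | h3 <;>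
          rw [h1, h2, h3] at h8 <;> omega
      rw [jacobiSym.neg _ hodd, jacobiSym.at_four hodd, ZMod.χ₄_nat_one_mod_four this]; rfl
    · have hm4 : m % 8 = 2 := by omega
      have h17 : n % 8 = 1 ∨ n % 8 = 7 := by
        rcases hXX with h1 | h1 | h1 <;> rcases hYY with h2 | h2 | h2 <;>
          rw [h1, h2, hm4] at h8 <;> omega
      have : (8 : ℤ) = 4 * 2 := by norm_num
      rw [this, jacobiSym.mul_left, jacobiSym.at_four hodd, jacobiSym.at_two hodd, ZMod.χ₈_nat_eq_if_mod_eight]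
      simp [h17, hnodd]
    · have hm4 : m % 8 = 6 := by omega
      have h17 : n % 8 = 1 ∨ n % 8 = 3 := by
        rcases hXX with h1 | h1 | h1 <;> rcases hYY with h2 | h2 | h2 <;>
          rw [h1, h2, hm4] at h8 <;> omega
      have : (-8 : ℤ) = 4 * (-2) := by norm_num
      rw [this, jacobiSym.mul_left, jacobiSym.at_four hodd, jacobiSym.at_neg_two hodd, ZMod.χ₈'_nat_eq_if_mod_eight]
      simp [h17, hnodd]
  · obtain ⟨hp, hd1⟩ := pg_pd_odd d (hS d hd) h1
    rw [pg_kron_odd d hd1 n hn]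
    have hp2 : d.natAbs ≠ 2 := by omega
    refine pg_fwd_odd d.natAbs hp hp2 Δ (by simpa using hdΔ) (pg_fund_sq Δ hΔ _ hp hp2) n ?_ X Y w hw h
    intro hdn
    have : IsUnit d := hcd.isUnit_of_dvd' (by simpa using hdn) dvd_rfl
    rw [Int.isUnit_iff_natAbs_eq] at this
    exact hp.one_lt.ne' this

theorem pg_bwd (Δ : ℤ) (hΔ : IsFundamentalDiscriminant Δ) (hneg : Δ < 0)
    (S : Finset ℤ) (hS : ∀ d ∈ S, IsPrimeDiscriminant d) (hprod : (∏ d ∈ S, d) = Δ)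
    (n : ℕ) (hn : 0 < n) (hcop : IsCoprime (n : ℤ) Δ) (r : ℤ) (hr : 4 * (n : ℤ) ∣ r ^ 2 - Δ)
    (H : ∀ d ∈ S, kroneckerSym d n = 1) :
    ∃ X Y w : ℤ, w ≠ 0 ∧ n * w ^ 2 = X ^ 2 - Δ * Y ^ 2 := by
  have key : ∀ m : ℤ, Squarefree m → m ∣ Δ → (∃ r : ℤ, (n : ℤ) ∣ r ^ 2 - m) →
      ∃ X Y w : ℤ, w ≠ 0 ∧ n * w ^ 2 = X ^ 2 - m * Y ^ 2 ∨ 0 < m := by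
    intro m hm hmd ⟨r, hr⟩
    by_cases hm0 : 0 < m
    · exact ⟨0, 0, 0, Or.inr hm0⟩
    have hm0' : m ≠ 0 := hm.ne_zero
    have hmabs : (m.natAbs : ℤ) = - m := by omega
    have hsq : Squarefree m.natAbs := Int.squarefree_natAbs.2 hm
    obtain ⟨s, hs⟩ := pg_crt n m.natAbs hsq (by
      intro p hp hpm
      by_cases hp2 : p = 2
      · subst hp2
        refine ⟨n, ?_⟩
        have : (n : ℤ) ^ 2 - n = (n - 1) * ((n - 1) + 1) := by ring
        rw [this]
        exact (Int.even_mul_succ_self _).two_dvd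
      have hpi : Prime (p : ℤ) := Nat.prime_iff_prime_int.1 hp
      have hpΔ : (p : ℤ) ∣ ∏ d ∈ S, d := by
        rw [hprod]; exact (Int.natCast_dvd.2 hpm).trans hmd
      obtain ⟨d, hd, hpd⟩ := (Prime.dvd_finsetProd_iff hpi _).1 hpΔ
      have hdodd : d % 2 = 1 := by
        by_contra hne
        have : p ∣ 2 ^ 3 := by
          have h1 : p ∣ d.natAbs := Int.natCast_dvd.1 hpd
          refine h1.trans ?_
          rcases pg_pd_even d (hS d hd) (by omega) with rfl | rfl | rfl <;> decide
        exact hp2 ((Nat.prime_dvd_prime_iff_eq hp Nat.prime_two).1 (hp.dvd_of_dvd_pow this))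
      obtain ⟨hdp, hd1⟩ := pg_pd_odd d (hS d hd) hdodd
      have hpe : p = d.natAbs := (Nat.prime_dvd_prime_iff_eq hp hdp).1 (Int.natCast_dvd.1 hpd)
      have hJ := H d hd
      rw [pg_kron_odd d hd1 n hn, ← hpe] at hJ
      have : Fact p.Prime := ⟨hp⟩
      obtain ⟨t, ht⟩ := ZMod.isSquare_of_jacobiSym_eq_one hJ
      obtain ⟨s, rfl⟩ := ZMod.intCast_surjective t
      refine ⟨s, ?_⟩
      rw [← ZMod.intCast_zmod_eq_zero_iff_dvd]
      push_cast at ht ⊢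
      rw [ht]; ring)
    obtain ⟨x, y, z, hz, h⟩ := pg_legendre m.natAbs n (by omega) hn
      (by
        rw [← Nat.isCoprime_iff_coprime, hmabs, IsCoprime.neg_left_iff]
        exact (hcop.of_isCoprime_of_dvd_right hmd).symm)
      (by
        by_cases h1 : m.natAbs = 1
        · exact Or.inl h1
        · right
          rintro ⟨k, hk⟩
          have := hsq k ⟨1, by rw [hk, mul_one]⟩
          rw [Nat.isUnit_iff] at this
          subst this
          exact h1 hk)
      r s (by rw [hmabs]; simpa [sub_eq_add_neg] using hr) hs
    refine ⟨x, y, z, Or.inl ⟨hz, ?_⟩⟩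
    rw [hmabs] at h
    linarith
  rcases id hΔ with ⟨_, h1 | ⟨m, rfl, hm, _⟩⟩
  · obtain ⟨X, Y, w, h | h⟩ := key Δ h1.2 dvd_rfl ⟨r, (dvd_mul_left _ _).trans hr⟩
    · exact ⟨X, Y, w, h⟩
    · omega
  · have hr2 : (2 : ℤ) ∣ r := by
      have : (2 : ℤ) ∣ r ^ 2 := by
        have h4 : (4 : ℤ) ∣ r ^ 2 - 4 * m := (dvd_mul_right _ _).trans hr
        omega
      exact Int.prime_two.dvd_of_dvd_pow this
    obtain ⟨k, rfl⟩ := hr2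
    obtain ⟨X, Y, w, h | h⟩ := key m hm (dvd_mul_left _ _) ⟨k, by
      have : (2 * k) ^ 2 - 4 * m = 4 * (k ^ 2 - m) := by ring
      rw [this] at hr
      exact (mul_dvd_mul_iff_left (by norm_num)).1 hr⟩
    · exact ⟨2 * X, Y, 2 * w, by simpa using h.1, by linear_combination 4 * h.2⟩
    · omega

/-- Explicit description of the ring of integers of a quadratic field with discriminant
`e ^ 2 + 4 * q`. -/
structure PGData (K : Type) [Field K] [NumberField K] where
  ω : 𝓞 K
  e : ℤ
  q : ℤ
  hω : ω ^ 2 = e * ω + q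
  hspan : ∀ z : 𝓞 K, ∃ a b : ℤ, z = a + b * ω
  hli : ∀ a b : ℤ, (a : 𝓞 K) + b * ω = 0 → a = 0 ∧ b = 0
  σ : 𝓞 K ≃+* 𝓞 K
  hσ : σ ω = e - ω

theorem pg_sigma {K : Type} [Field K] [NumberField K] (D : PGData K) (a b : ℤ) :
    D.σ (a + b * D.ω) = a + b * (D.e - D.ω) := by
  simp [D.hσ]

theorem pg_norm {K : Type} [Field K] [NumberField K] (D : PGData K) (a b : ℤ) :
    ((a : 𝓞 K) + b * D.ω) * D.σ (a + b * D.ω) = ((a ^ 2 + D.e * a * b - D.q * b ^ 2 : ℤ) : 𝓞 K) := by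
  rw [pg_sigma]
  push_cast
  linear_combination (-(b : 𝓞 K) ^ 2) * D.hω

theorem pg_int_dvd {K : Type} [Field K] [NumberField K] (D : PGData K) (a b : ℤ)
    (h : (a : 𝓞 K) ∣ (b : 𝓞 K)) : a ∣ b := by
  obtain ⟨z, hz⟩ := h
  obtain ⟨x, y, rfl⟩ := D.hspan z
  obtain ⟨h1, _⟩ := D.hli (a * x - b) (a * y) (by push_cast; linear_combination -hz)
  exact ⟨x, by linarith⟩

theorem pg_primitive {K : Type} [Field K] [NumberField K] (D : PGData K) (I : Ideal (𝓞 K))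
    (hI : I ≠ ⊥) : ∃ (g : ℤ) (J : Ideal (𝓞 K)) (k : ℤ), g ≠ 0 ∧
      I = Ideal.span {(g : 𝓞 K)} * J ∧ D.ω + k ∈ J := by
  let C : Ideal ℤ :=
    { carrier := {b | ∃ a : ℤ, (a : 𝓞 K) + b * D.ω ∈ I}
      add_mem' := by
        rintro b b' ⟨a, ha⟩ ⟨a', ha'⟩
        refine ⟨a + a', ?_⟩
        have := I.add_mem ha ha'
        convert this using 1
        push_cast; ring
      zero_mem' := ⟨0, by simp⟩
      smul_mem' := by
        rintro c b ⟨a, ha⟩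
        refine ⟨c * a, ?_⟩
        have := I.mul_mem_left (c : 𝓞 K) ha
        convert this using 1
        push_cast [smul_eq_mul]; ring }
  have hCmem : ∀ a b : ℤ, (a : 𝓞 K) + b * D.ω ∈ I → b ∈ C := fun a b h => ⟨a, h⟩
  obtain ⟨g, hg⟩ := (IsPrincipalIdealRing.principal C).principal
  have hgd : ∀ b, b ∈ C → g ∣ b := by
    intro b hb
    rw [hg] at hb
    exact Ideal.mem_span_singleton.1 hb
  have hmul : ∀ a b : ℤ, (a : 𝓞 K) + b * D.ω ∈ I → a + b * D.e ∈ C := by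
    intro a b h
    apply hCmem (b * D.q)
    have := I.mul_mem_right D.ω h
    convert this using 1
    push_cast
    linear_combination (-(b : 𝓞 K)) * D.hω
  have hda : ∀ a b : ℤ, (a : 𝓞 K) + b * D.ω ∈ I → g ∣ a ∧ g ∣ b := by
    intro a b h
    have h1 := hgd _ (hCmem _ _ h)
    have h2 := hgd _ (hmul _ _ h)
    exact ⟨(dvd_add_left (h1.mul_right _)).1 h2, h1⟩
  have hle : I ≤ Ideal.span {(g : 𝓞 K)} := by
    intro z hz
    obtain ⟨a, b, rfl⟩ := D.hspan z
    obtain ⟨⟨a', rfl⟩, ⟨b', rfl⟩⟩ := hda a b hz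
    rw [Ideal.mem_span_singleton]
    exact ⟨a' + b' * D.ω, by push_cast; ring⟩
  have hg0 : g ≠ 0 := by
    rintro rfl
    apply hI
    rw [eq_bot_iff]
    simpa using hle
  obtain ⟨J, hJ⟩ := Ideal.dvd_iff_le.2 hle
  have hgC : g ∈ C := by rw [hg]; exact Submodule.mem_span_singleton_self g
  obtain ⟨a, ha⟩ := hgC
  obtain ⟨⟨k, rfl⟩, _⟩ := hda a g ha
  refine ⟨g, J, k, hg0, hJ, ?_⟩
  rw [hJ, Ideal.mem_span_singleton_mul] at ha
  obtain ⟨z, hz, hz'⟩ := ha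
  have hg0' : (g : 𝓞 K) ≠ 0 := by exact_mod_cast hg0
  have : z = D.ω + k := by
    apply mul_left_cancel₀ hg0'
    rw [hz']; push_cast; ring
  rwa [← this]

theorem pg_prim_int {K : Type} [Field K] [NumberField K] (D : PGData K) (J : Ideal (𝓞 K))
    (k : ℤ) (hk : D.ω + k ∈ J) (z : ℤ) (hz : (z : 𝓞 K) ∈ J) :
    (Ideal.absNorm J : ℤ) ∣ z := by
  have hs : ∀ x : 𝓞 K ⧸ J, x ∈ AddSubgroup.zmultiples (1 : 𝓞 K ⧸ J) := by
    intro x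
    obtain ⟨y, rfl⟩ := Ideal.Quotient.mk_surjective x
    obtain ⟨a, b, rfl⟩ := D.hspan y
    refine ⟨a - b * k, ?_⟩
    simp only [zsmul_one]
    rw [← map_intCast (Ideal.Quotient.mk J), Ideal.Quotient.eq]
    have := J.mul_mem_left (-(b : 𝓞 K)) hk
    convert this using 1
    push_cast; ring
  have ho := addOrderOf_eq_card_of_forall_mem_zmultiples hs
  have hn : Ideal.absNorm J = Nat.card (𝓞 K ⧸ J) := by
    rw [Ideal.absNorm_apply, Submodule.cardQuot_apply]
  rw [hn, ← ho, addOrderOf_dvd_iff_zsmul_eq_zero, zsmul_one, ← map_intCast (Ideal.Quotient.mk J)]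
  exact Ideal.Quotient.eq_zero_iff_mem.2 hz

theorem pg_prim_norm {K : Type} [Field K] [NumberField K] (D : PGData K) (J : Ideal (𝓞 K))
    (k : ℤ) (hk : D.ω + k ∈ J) :
    4 * (Ideal.absNorm J : ℤ) ∣ (2 * k + D.e) ^ 2 - (D.e ^ 2 + 4 * D.q) := by
  have h1 : ((k ^ 2 + D.e * k * 1 - D.q * 1 ^ 2 : ℤ) : 𝓞 K) ∈ J := by
    rw [← pg_norm]
    apply J.mul_mem_right
    convert hk using 1
    push_cast; ring
  have := pg_prim_int D J k hk _ h1
  obtain ⟨t, ht⟩ := this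
  exact ⟨t, by linear_combination 4 * ht⟩

theorem pg_absNorm_map {K : Type} [Field K] [NumberField K] (σ : 𝓞 K ≃+* 𝓞 K)
    (I : Ideal (𝓞 K)) : Ideal.absNorm (I.map (σ : 𝓞 K →+* 𝓞 K)) = Ideal.absNorm I := by
  rw [Ideal.absNorm_apply, Submodule.cardQuot_apply, Ideal.absNorm_apply, Submodule.cardQuot_apply]
  exact (Nat.card_congr (Ideal.quotientEquiv I _ σ rfl).toEquiv).symm

theorem pg_absNorm_int {K : Type} [Field K] [NumberField K] (hdeg : Module.finrank ℚ K = 2)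
    (g : ℤ) : Ideal.absNorm (Ideal.span {(g : 𝓞 K)}) = g.natAbs ^ 2 := by
  rw [Ideal.absNorm_span_singleton]
  have : (g : 𝓞 K) = algebraMap ℤ (𝓞 K) g := by simp
  rw [this, Algebra.norm_algebraMap, RingOfIntegers.rank, hdeg, Int.natAbs_pow]

theorem pg_ideal_eq {K : Type} [Field K] [NumberField K] (I J : Ideal (𝓞 K)) (hI : I ≠ ⊥)
    (h : I ≤ J) (hn : Ideal.absNorm I = Ideal.absNorm J) : I = J := by
  obtain ⟨L, rfl⟩ := Ideal.dvd_iff_le.2 h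
  have h0 : Ideal.absNorm (J * L) ≠ 0 := by rwa [Ne, Ideal.absNorm_eq_zero_iff]
  rw [map_mul] at h0 hn
  have : Ideal.absNorm L = 1 := by
    have : Ideal.absNorm J ≠ 0 := left_ne_zero_of_mul h0
    exact (Nat.mul_eq_left this).1 hn
  rw [Ideal.absNorm_eq_one_iff] at this
  rw [this, Ideal.mul_top]

theorem pg_prim_conj {K : Type} [Field K] [NumberField K] (hdeg : Module.finrank ℚ K = 2)
    (D : PGData K) (J : Ideal (𝓞 K)) (hJ : J ≠ ⊥)
    (k : ℤ) (hk : D.ω + k ∈ J) :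
    J * J.map (D.σ : 𝓞 K →+* 𝓞 K) = Ideal.span {((Ideal.absNorm J : ℤ) : 𝓞 K)} := by
  have hmap : J.map (D.σ : 𝓞 K →+* 𝓞 K) ≠ ⊥ := by
    rw [Ne, ← Ideal.absNorm_eq_zero_iff, pg_absNorm_map, Ideal.absNorm_eq_zero_iff]
    exact hJ
  apply pg_ideal_eq
  · exact mul_ne_zero hJ hmap
  · have hel : ∀ z ∈ J, ∃ b r : ℤ, z = b * (D.ω + k) + (Ideal.absNorm J : ℤ) * r := by
      intro z hz
      obtain ⟨a, b, rfl⟩ := D.hspan z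
      have : ((a - b * k : ℤ) : 𝓞 K) ∈ J := by
        have := J.sub_mem hz (J.mul_mem_left (b : 𝓞 K) hk)
        convert this using 1
        push_cast; ring
      obtain ⟨r, hr⟩ := pg_prim_int D J k hk _ this
      refine ⟨b, r, ?_⟩
      have hr' := congrArg (Int.cast : ℤ → 𝓞 K) hr
      push_cast at hr' ⊢
      linear_combination hr'
    rw [Ideal.mul_le]
    intro z hz z' hz'
    obtain ⟨y, hy, rfl⟩ := (Ideal.mem_map_iff_of_surjective (D.σ : 𝓞 K →+* 𝓞 K) D.σ.surjective).1 hz'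
    obtain ⟨b, r, rfl⟩ := hel z hz
    obtain ⟨b', r', rfl⟩ := hel y hy
    obtain ⟨t, ht⟩ := pg_prim_norm D J k hk
    have ht' : k ^ 2 + D.e * k - D.q = (Ideal.absNorm J : ℤ) * t := by linarith
    have ht2 := congrArg (Int.cast : ℤ → 𝓞 K) ht'
    rw [Ideal.mem_span_singleton]
    refine ⟨b * b' * t + b * (D.ω + k) * r' + b' * (D.e - D.ω + k) * r + (Ideal.absNorm J : ℤ) * r * r', ?_⟩
    push_cast at ht2
    simp [D.hσ]
    linear_combination (b * b' : 𝓞 K) * ht2 - (b * b' : 𝓞 K) * D.hω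
  · rw [map_mul, pg_absNorm_map, pg_absNorm_int hdeg, Int.natAbs_natCast, sq]

theorem pg_conj {K : Type} [Field K] [NumberField K] (hdeg : Module.finrank ℚ K = 2)
    (D : PGData K) (I : Ideal (𝓞 K)) (hI : I ≠ ⊥) :
    I * I.map (D.σ : 𝓞 K →+* 𝓞 K) = Ideal.span {((Ideal.absNorm I : ℤ) : 𝓞 K)} := by
  obtain ⟨g, J, k, hg, rfl, hk⟩ := pg_primitive D I hI
  have hJ : J ≠ ⊥ := by rintro rfl; simp at hI
  have h := pg_prim_conj hdeg D J hJ k hk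
  rw [Ideal.map_mul, Ideal.map_span, Set.image_singleton]
  have : (D.σ : 𝓞 K →+* 𝓞 K) (g : 𝓞 K) = g := map_intCast _ _
  rw [this, mul_mul_mul_comm, h, Ideal.span_singleton_mul_span_singleton,
    Ideal.span_singleton_mul_span_singleton, map_mul, pg_absNorm_int hdeg]
  congr 2
  have : ((g.natAbs ^ 2 * Ideal.absNorm J : ℕ) : ℤ) = g * g * Ideal.absNorm J := by
    push_cast; rw [sq_abs]; ring
  rw [this]; push_cast; rfl

theorem pg_rat_int (m : ℤ) (hm : Squarefree m) (y : ℚ) (N : ℤ) (h : (m : ℚ) * y ^ 2 = N) :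
    ∃ k : ℤ, y = k := by
  have hd0 : (y.den : ℚ) ≠ 0 := by exact_mod_cast y.den_nz
  have h1 : m * y.num ^ 2 = N * (y.den : ℤ) ^ 2 := by
    have hy : y = y.num / y.den := (Rat.num_div_den y).symm
    rw [hy] at h
    field_simp at h
    rw [mul_comm N]
    exact_mod_cast h
  have h2 : (y.den : ℤ) ^ 2 ∣ m * y.num ^ 2 := ⟨N, by rw [h1]; ring⟩
  have hc : IsCoprime ((y.den : ℤ) ^ 2) (y.num ^ 2) := by
    apply IsCoprime.pow
    rw [Int.isCoprime_iff_gcd_eq_one, Int.gcd_comm]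
    exact y.reduced
  have h3 := hm (y.den : ℤ) (by rw [← sq]; exact hc.dvd_of_dvd_mul_right h2)
  have h4 : y.den = 1 := by
    rw [Int.isUnit_iff_natAbs_eq] at h3
    simpa using h3
  exact ⟨y.num, (Rat.coe_int_num_of_den_eq_one h4).symm⟩

theorem pg_field {K : Type} [Field K] [NumberField K] (Δ : ℤ) (hneg : Δ < 0)
    (hdeg : Module.finrank ℚ K = 2) (α : K) (hα : α ^ 2 = (Δ : K)) :
    (∀ a b : ℚ, (a : K) + b * α = 0 → a = 0 ∧ b = 0) ∧ (∀ z : K, ∃ a b : ℚ, z = a + b * α) ∧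
      ∃ σ : K ≃ₐ[ℚ] K, σ α = -α := by
  have hli : ∀ a b : ℚ, (a : K) + b * α = 0 → a = 0 ∧ b = 0 := by
    intro a b h
    have hb : b = 0 := by
      by_contra hb
      have h1 : a ^ 2 = b ^ 2 * Δ := by
        have : ((a ^ 2 : ℚ) : K) = ((b ^ 2 * Δ : ℚ) : K) := by
          push_cast
          linear_combination ((a : K) - b * α) * h + (b : K) ^ 2 * hα
        exact_mod_cast this
      have h2 : (0 : ℚ) < b ^ 2 := by positivity
      have h3 : (Δ : ℚ) < 0 := by exact_mod_cast hneg
      nlinarith [sq_nonneg a]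
    subst hb
    simp at h
    exact ⟨h, rfl⟩
  have hspan : ∀ z : K, ∃ a b : ℚ, z = a + b * α := by
    have hl : LinearIndependent ℚ ![(1 : K), α] := by
      rw [LinearIndependent.pair_iff]
      intro a b h
      apply hli
      simpa [Algebra.smul_def] using h
    let B := basisOfLinearIndependentOfCardEqFinrank hl (by simp [hdeg])
    intro z
    refine ⟨B.repr z 0, B.repr z 1, ?_⟩
    have := B.sum_repr z
    rw [Fin.sum_univ_two] at this
    conv_lhs => rw [← this]
    simp [B, Algebra.smul_def]
  refine ⟨hli, hspan, ?_⟩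
  have : Algebra.IsQuadraticExtension ℚ K := { finrank_eq_two' := hdeg }
  have hcard : Nat.card (K ≃ₐ[ℚ] K) = 2 := by rw [IsGalois.card_aut_eq_finrank, hdeg]
  have : Nontrivial (K ≃ₐ[ℚ] K) := by
    rw [← Finite.one_lt_card_iff_nontrivial, hcard]; norm_num
  obtain ⟨σ, hσ⟩ := exists_ne (1 : K ≃ₐ[ℚ] K)
  refine ⟨σ, ?_⟩
  have h2 : (σ α) ^ 2 = α ^ 2 := by rw [← map_pow, hα, map_intCast]
  rcases sq_eq_sq_iff_eq_or_eq_neg.1 h2 with h | h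
  · exfalso
    apply hσ
    ext z
    obtain ⟨a, b, rfl⟩ := hspan z
    simp [h]
  · exact h

theorem pg_data {K : Type} [Field K] [NumberField K] (Δ : ℤ) (hΔ : IsFundamentalDiscriminant Δ)
    (hneg : Δ < 0) (hdeg : Module.finrank ℚ K = 2) (α : K) (hα : α ^ 2 = (Δ : K)) :
    ∃ D : PGData K, D.e ^ 2 + 4 * D.q = Δ := by
  obtain ⟨hli, hspan, σ, hσ⟩ := pg_field Δ hneg hdeg α hα
  have hisInt : ∀ r : ℚ, IsIntegral ℤ (r : K) → ∃ t : ℤ, r = t := by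
    intro r hr
    have h1 : IsIntegral ℤ (algebraMap ℚ K r) := by simpa using hr
    rw [isIntegral_algebraMap_iff (algebraMap ℚ K).injective] at h1
    obtain ⟨t, ht⟩ := IsIntegrallyClosed.isIntegral_iff.1 h1
    exact ⟨t, by simpa using ht.symm⟩
  have htr : ∀ a b : ℚ, IsIntegral ℤ ((a : K) + b * α) → ∃ t N : ℤ, 2 * a = t ∧ a ^ 2 - Δ * b ^ 2 = N := by
    intro a b h
    have h' : IsIntegral ℤ ((a : K) - b * α) := by
      have := h.map (σ : K →+* K).toIntAlgHom
      simpa [hσ, sub_eq_add_neg] using this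
    obtain ⟨t, ht⟩ := hisInt (2 * a) (by
      have e : ((2 * a : ℚ) : K) = ((a : K) + b * α) + ((a : K) - b * α) := by push_cast; ring
      rw [e]; exact h.add h')
    obtain ⟨N, hN⟩ := hisInt (a ^ 2 - Δ * b ^ 2) (by
      have e : ((a ^ 2 - Δ * b ^ 2 : ℚ) : K) = ((a : K) + b * α) * ((a : K) - b * α) := by
        push_cast; linear_combination (b : K) ^ 2 * hα
      rw [e]; exact h.mul h')
    exact ⟨t, N, ht, hN⟩
  obtain ⟨e, q, heq, hfin⟩ : ∃ e q : ℤ, e ^ 2 + 4 * q = Δ ∧ ∀ a b : ℚ, IsIntegral ℤ ((a : K) + b * α) →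
      ∃ x y : ℤ, a = x + y * (e / 2) ∧ b = y / 2 := by
    rcases hΔ with ⟨_, ⟨h1, hsq⟩ | ⟨m, rfl, hsq, hm⟩⟩
    · refine ⟨1, (Δ - 1) / 4, by omega, ?_⟩
      intro a b h
      obtain ⟨t, N, ht, hN⟩ := htr a b h
      have h2 : (Δ : ℚ) * (2 * b) ^ 2 = ((t ^ 2 - 4 * N : ℤ) : ℚ) := by
        push_cast
        rw [← ht, ← hN]; ring
      obtain ⟨y, hy⟩ := pg_rat_int Δ hsq _ _ h2
      rw [hy] at h2
      have h3 : Δ * y ^ 2 = t ^ 2 - 4 * N := by exact_mod_cast h2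
      have h4 : (2 : ℤ) ∣ t - y := by
        have h5 : (Δ * y ^ 2) % 4 = t ^ 2 % 4 := by rw [h3]; omega
        rw [Int.mul_emod, h1, pow_two, pow_two, Int.mul_emod y, Int.mul_emod t] at h5
        have hX : t % 4 = 0 ∨ t % 4 = 1 ∨ t % 4 = 2 ∨ t % 4 = 3 := by omega
        have hY : y % 4 = 0 ∨ y % 4 = 1 ∨ y % 4 = 2 ∨ y % 4 = 3 := by omega
        rcases hX with h1 | h1 | h1 | h1 <;> rcases hY with h2 | h2 | h2 | h2 <;>
          rw [h1, h2] at h5 <;> omega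
      obtain ⟨x, hx⟩ := h4
      have hx' : (t : ℚ) - y = 2 * x := by exact_mod_cast hx
      refine ⟨x, y, ?_, by linarith⟩
      push_cast
      linarith
    · refine ⟨0, m, by ring, ?_⟩
      intro a b h
      obtain ⟨t, N, ht, hN⟩ := htr a b h
      have h2 : (m : ℚ) * (4 * b) ^ 2 = ((t ^ 2 - 4 * N : ℤ) : ℚ) := by
        push_cast at hN ⊢
        rw [← ht, ← hN]; ring
      obtain ⟨y, hy⟩ := pg_rat_int m hsq _ _ h2
      rw [hy] at h2
      have h3 : m * y ^ 2 = t ^ 2 - 4 * N := by exact_mod_cast h2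
      have h4 : (2 : ℤ) ∣ t ∧ (2 : ℤ) ∣ y := by
        have h5 : (m * y ^ 2) % 4 = t ^ 2 % 4 := by rw [h3]; omega
        rw [Int.mul_emod, pow_two, pow_two, Int.mul_emod y, Int.mul_emod t] at h5
        have hX : t % 4 = 0 ∨ t % 4 = 1 ∨ t % 4 = 2 ∨ t % 4 = 3 := by omega
        have hY : y % 4 = 0 ∨ y % 4 = 1 ∨ y % 4 = 2 ∨ y % 4 = 3 := by omega
        rcases hX with h1 | h1 | h1 | h1 <;> rcases hY with h2 | h2 | h2 | h2 <;>
          rcases hm with h3 | h3 <;> rw [h1, h2, h3] at h5 <;> omega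
      obtain ⟨⟨x, rfl⟩, ⟨y', rfl⟩⟩ := h4
      push_cast at ht hy
      exact ⟨x, y', by push_cast; linarith, by linarith⟩
  have heq' : (e : K) ^ 2 + 4 * q = Δ := by exact_mod_cast congrArg (Int.cast : ℤ → K) heq
  have hrel : (((e : K) + α) / 2) ^ 2 = e * (((e : K) + α) / 2) + q := by
    field_simp
    linear_combination hα - heq'
  have hωi : IsIntegral ℤ (((e : K) + α) / 2) := by
    refine ⟨Polynomial.X ^ 2 - (Polynomial.C e * Polynomial.X + Polynomial.C q), ?_, ?_⟩
    · apply Polynomial.monic_X_pow_sub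
      exact lt_of_le_of_lt Polynomial.degree_linear_le (by norm_num)
    · simp only [Polynomial.eval₂_sub, Polynomial.eval₂_add, Polynomial.eval₂_mul,
        Polynomial.eval₂_pow, Polynomial.eval₂_X, Polynomial.eval₂_C, hrel]
      simp
  let ω : 𝓞 K := ⟨((e : K) + α) / 2, hωi⟩
  have hωc : algebraMap (𝓞 K) K ω = ((e : K) + α) / 2 := rfl
  have hinj : Function.Injective (algebraMap (𝓞 K) K) := FaithfulSMul.algebraMap_injective (𝓞 K) K
  refine ⟨⟨ω, e, q, ?_, ?_, ?_, RingOfIntegers.mapRingEquiv (σ : K ≃+* K), ?_⟩, heq⟩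
  · apply hinj
    simp only [map_pow, map_mul, map_add, map_sub, map_intCast, map_zero]
    rw [hωc]; exact hrel
  · intro z
    obtain ⟨a, b, hz⟩ := hspan (z : K)
    obtain ⟨x, y, hx, hy⟩ := hfin a b (by rw [← hz]; exact RingOfIntegers.isIntegral_coe z)
    refine ⟨x, y, ?_⟩
    apply hinj
    simp only [map_pow, map_mul, map_add, map_sub, map_intCast, map_zero]
    rw [hωc]
    change (z : K) = _
    rw [hz, hx, hy]
    push_cast
    ring
  · intro a b h
    have h' := congrArg (algebraMap (𝓞 K) K) h
    simp only [map_pow, map_mul, map_add, map_sub, map_intCast, map_zero] at h'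
    rw [hωc] at h'
    obtain ⟨h1, h2⟩ := hli (a + b * e / 2) (b / 2) (by
      push_cast
      linear_combination h')
    have hb : (b : ℚ) = 0 := by linarith
    have ha : (a : ℚ) = 0 := by rw [hb] at h1; linarith
    exact ⟨by exact_mod_cast ha, by exact_mod_cast hb⟩
  · apply hinj
    change (σ : K ≃+* K) (((e : K) + α) / 2) = _
    rw [map_sub, map_intCast, hωc]
    have : (σ : K ≃+* K) (((e : K) + α) / 2) = ((e : K) + σ α) / 2 := by
      change σ (((e : K) + α) / 2) = _
      rw [map_div₀, map_add, map_intCast, map_ofNat]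
    rw [this, hσ]
    ring

theorem pg_coprime_rep {K : Type} [Field K] [NumberField K] (Δ : ℤ) (hΔ : Δ ≠ 0)
    (c : ClassGroup (𝓞 K)) : ∃ (I : Ideal (𝓞 K)) (hI : I ∈ (Ideal (𝓞 K))⁰),
      ClassGroup.mk0 ⟨I, hI⟩ = c ∧ IsCoprime I (Ideal.span {(Δ : 𝓞 K)}) := by
  by_cases hu : Ideal.span {(Δ : 𝓞 K)} = ⊤
  · obtain ⟨⟨I, hI⟩, h⟩ := ClassGroup.mk0_surjective c
    refine ⟨I, hI, h, ?_⟩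
    rw [hu, Ideal.isCoprime_iff_sup_eq]; simp
  obtain ⟨⟨J, hJ⟩, h⟩ := ClassGroup.mk0_surjective c⁻¹
  have hJ0 : J ≠ 0 := nonZeroDivisors.ne_zero hJ
  have hD0 : Ideal.span {(Δ : 𝓞 K)} ≠ 0 := by
    rw [Ne, Ideal.zero_eq_bot, Ideal.span_singleton_eq_bot]; exact_mod_cast hΔ
  obtain ⟨a, ha⟩ := IsDedekindDomain.exists_sup_span_eq (I := J * Ideal.span {(Δ : 𝓞 K)}) (J := J)
    Ideal.mul_le_left (mul_ne_zero hJ0 hD0)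
  have hle : Ideal.span {a} ≤ J := by rw [← ha]; exact le_sup_right
  obtain ⟨I, hI⟩ := Ideal.dvd_iff_le.2 hle
  have hsup : Ideal.span {(Δ : 𝓞 K)} ⊔ I = ⊤ := by
    rw [hI, ← Ideal.mul_sup] at ha
    rw [← Ideal.one_eq_top]
    apply mul_left_cancel₀ hJ0
    rw [ha, mul_one]
  have hI0 : I ≠ 0 := by
    rintro rfl
    apply hu
    simpa using hsup
  have hIm : I ∈ (Ideal (𝓞 K))⁰ := mem_nonZeroDivisors_of_ne_zero hI0
  refine ⟨I, hIm, ?_, ?_⟩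
  · rw [← inv_inv c, ← h]
    refine ClassGroup.mk0_eq_mk0_inv_iff.2 ⟨a, ?_, ?_⟩
    · rintro rfl
      rw [Ideal.span_singleton_zero, eq_comm] at hI
      exact (mul_ne_zero hJ0 hI0) hI
    · change I * J = _
      rw [hI, mul_comm]
  · rw [Ideal.isCoprime_iff_sup_eq, sup_comm]; exact hsup

theorem pg_mk0_mul {K : Type} [Field K] [NumberField K] (I J : Ideal (𝓞 K))
    (hI : I ∈ (Ideal (𝓞 K))⁰) (hJ : J ∈ (Ideal (𝓞 K))⁰) (hIJ : I * J ∈ (Ideal (𝓞 K))⁰) :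
    ClassGroup.mk0 ⟨I * J, hIJ⟩ = ClassGroup.mk0 ⟨I, hI⟩ * ClassGroup.mk0 ⟨J, hJ⟩ := by
  rw [← map_mul]; rfl

theorem pg_coprime_norm {K : Type} [Field K] [NumberField K] (hdeg : Module.finrank ℚ K = 2)
    (D : PGData K) (Δ : ℤ) (I : Ideal (𝓞 K)) (hI : I ≠ ⊥)
    (h : IsCoprime I (Ideal.span {(Δ : 𝓞 K)})) : IsCoprime (Ideal.absNorm I : ℤ) Δ := by
  rw [Ideal.isCoprime_iff_exists] at h
  obtain ⟨a, ha, y, hy, hay⟩ := h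
  obtain ⟨b, rfl⟩ := Ideal.mem_span_singleton.1 hy
  obtain ⟨u, v, rfl⟩ := D.hspan b
  have h1 : a * D.σ a ∈ I * I.map (D.σ : 𝓞 K →+* 𝓞 K) :=
    Ideal.mul_mem_mul ha (Ideal.mem_map_of_mem _ ha)
  rw [pg_conj hdeg D I hI, Ideal.mem_span_singleton] at h1
  have h2 : a = ((1 - Δ * u : ℤ) : 𝓞 K) + ((-Δ * v : ℤ) : 𝓞 K) * D.ω := by
    push_cast; linear_combination hay
  rw [h2, pg_norm] at h1
  obtain ⟨t, ht⟩ := pg_int_dvd D _ _ h1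
  refine ⟨t, 2 * u - Δ * u ^ 2 + D.e * (1 - Δ * u) * v + D.q * Δ * v ^ 2, ?_⟩
  linear_combination -ht

theorem pg_sq_of_norm {K : Type} [Field K] [NumberField K] (hdeg : Module.finrank ℚ K = 2)
    (D : PGData K) (I : Ideal (𝓞 K)) (hI : I ∈ (Ideal (𝓞 K))⁰) (X Y w : ℤ) (hw : w ≠ 0)
    (h : (Ideal.absNorm I : ℤ) * w ^ 2 = X ^ 2 - (D.e ^ 2 + 4 * D.q) * Y ^ 2) :
    IsSquare (ClassGroup.mk0 ⟨I, hI⟩) := by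
  have hI0 : I ≠ ⊥ := nonZeroDivisors.ne_zero hI
  have hmap0 : ∀ J : Ideal (𝓞 K), J ≠ ⊥ → J.map (D.σ : 𝓞 K →+* 𝓞 K) ≠ ⊥ := by
    intro J hJ
    rw [Ne, ← Ideal.absNorm_eq_zero_iff, pg_absNorm_map, Ideal.absNorm_eq_zero_iff]
    exact hJ
  set n : ℤ := (Ideal.absNorm I : ℤ) with hn
  have hn0 : n ≠ 0 := by
    rw [hn, Nat.cast_ne_zero, Ne, Ideal.absNorm_eq_zero_iff]; exact hI0
  obtain ⟨u, hu⟩ : ∃ u : 𝓞 K, u * D.σ u = ((n * w ^ 2 : ℤ) : 𝓞 K) := by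
    refine ⟨((X - Y * D.e : ℤ) : 𝓞 K) + ((2 * Y : ℤ) : 𝓞 K) * D.ω, ?_⟩
    rw [pg_norm, h]
    congr 1
    ring
  have hw0 : (w : 𝓞 K) ≠ 0 := by exact_mod_cast hw
  have hu0 : u ≠ 0 := by
    rintro rfl
    rw [zero_mul, eq_comm, Int.cast_eq_zero] at hu
    exact mul_ne_zero hn0 (pow_ne_zero 2 hw) hu
  set I' := I.map (D.σ : 𝓞 K →+* 𝓞 K) with hI'
  have hII : I * I' = Ideal.span {(n : 𝓞 K)} := pg_conj hdeg D I hI0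
  set B : Ideal (𝓞 K) := Ideal.span {u} ⊔ Ideal.span {(w : 𝓞 K)} * I with hB
  have hB0 : B ≠ ⊥ := by
    intro hb
    have : Ideal.span {u} ≤ B := le_sup_left
    rw [hb, le_bot_iff, Ideal.span_singleton_eq_bot] at this
    exact hu0 this
  set B' := B.map (D.σ : 𝓞 K →+* 𝓞 K) with hB'
  have hBB : B * B' = Ideal.span {((Ideal.absNorm B : ℤ) : 𝓞 K)} := pg_conj hdeg D B hB0
  have hB'e : B' = Ideal.span {D.σ u} ⊔ Ideal.span {(w : 𝓞 K)} * I' := by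
    rw [hB', hB, Ideal.map_sup, Ideal.map_mul, Ideal.map_span, Ideal.map_span,
      Set.image_singleton, Set.image_singleton]
    have : (D.σ : 𝓞 K →+* 𝓞 K) (w : 𝓞 K) = w := map_intCast _ _
    rw [this]; rfl
  have key : Ideal.span {u} * B' = Ideal.span {(w : 𝓞 K)} * (I' * B) := by
    have e1 : Ideal.span {u} * Ideal.span {D.σ u} =
        Ideal.span {(w : 𝓞 K)} * (Ideal.span {(w : 𝓞 K)} * (I * I')) := by
      rw [hII, Ideal.span_singleton_mul_span_singleton, Ideal.span_singleton_mul_span_singleton,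
        Ideal.span_singleton_mul_span_singleton, hu]
      congr 2
      push_cast; ring
    rw [hB'e, hB, Ideal.mul_sup, Ideal.mul_sup, Ideal.mul_sup, e1, sup_comm]
    congr 1
    · ring
    · ring
  have mI' : I' ∈ (Ideal (𝓞 K))⁰ := mem_nonZeroDivisors_of_ne_zero (hmap0 I hI0)
  have mB : B ∈ (Ideal (𝓞 K))⁰ := mem_nonZeroDivisors_of_ne_zero hB0
  have mB' : B' ∈ (Ideal (𝓞 K))⁰ := mem_nonZeroDivisors_of_ne_zero (hmap0 B hB0)
  have c1 : ClassGroup.mk0 ⟨I, hI⟩ = (ClassGroup.mk0 ⟨I', mI'⟩)⁻¹ :=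
    ClassGroup.mk0_eq_mk0_inv_iff.2 ⟨(n : 𝓞 K), by exact_mod_cast hn0, hII⟩
  have c2 : ClassGroup.mk0 ⟨B, mB⟩ = (ClassGroup.mk0 ⟨B', mB'⟩)⁻¹ :=
    ClassGroup.mk0_eq_mk0_inv_iff.2 ⟨((Ideal.absNorm B : ℤ) : 𝓞 K), by
      rw [Int.cast_ne_zero, Nat.cast_ne_zero, Ne, Ideal.absNorm_eq_zero_iff]; exact hB0, hBB⟩
  have c3 : ClassGroup.mk0 ⟨B', mB'⟩ = ClassGroup.mk0 ⟨I', mI'⟩ * ClassGroup.mk0 ⟨B, mB⟩ := by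
    rw [← pg_mk0_mul I' B mI' mB (mul_mem mI' mB)]
    exact ClassGroup.mk0_eq_mk0_iff.2 ⟨u, (w : 𝓞 K), hu0, hw0, key⟩
  refine ⟨ClassGroup.mk0 ⟨B, mB⟩, ?_⟩
  have c4 : ClassGroup.mk0 ⟨I', mI'⟩ = ClassGroup.mk0 ⟨B', mB'⟩ * ClassGroup.mk0 ⟨B', mB'⟩ := by
    rw [c2] at c3
    nth_rewrite 1 [c3]
    rw [inv_mul_cancel_right]
  rw [c1, c4, c2, mul_inv]

theorem pg_norm_of_sq {K : Type} [Field K] [NumberField K] (hdeg : Module.finrank ℚ K = 2)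
    (D : PGData K) (hneg : D.e ^ 2 + 4 * D.q < 0) (I : Ideal (𝓞 K)) (hI : I ∈ (Ideal (𝓞 K))⁰)
    (h : IsSquare (ClassGroup.mk0 ⟨I, hI⟩)) : ∃ X Y w : ℤ, w ≠ 0 ∧
    (Ideal.absNorm I : ℤ) * w ^ 2 = X ^ 2 - (D.e ^ 2 + 4 * D.q) * Y ^ 2 := by
  obtain ⟨b, hb⟩ := h
  obtain ⟨⟨B, mB⟩, hB⟩ := ClassGroup.mk0_surjective b⁻¹
  have mBB : B * B ∈ (Ideal (𝓞 K))⁰ := mul_mem mB mB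
  have h1 : ClassGroup.mk0 ⟨I, hI⟩ = (ClassGroup.mk0 ⟨B * B, mBB⟩)⁻¹ := by
    rw [pg_mk0_mul B B mB mB mBB, hB, hb, mul_inv, inv_inv]
  obtain ⟨γ, hγ0, hγ⟩ := ClassGroup.mk0_eq_mk0_inv_iff.1 h1
  change I * (B * B) = _ at hγ
  have h2 := pg_conj hdeg D (Ideal.span {γ}) (by rwa [Ne, Ideal.span_singleton_eq_bot])
  rw [Ideal.map_span, Set.image_singleton, Ideal.span_singleton_mul_span_singleton, ← hγ,
    map_mul, map_mul] at h2
  obtain ⟨x, y, rfl⟩ := D.hspan γ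
  have h3 := Ideal.span_singleton_eq_span_singleton.1 h2
  have h4 : ((x : 𝓞 K) + y * D.ω) * (D.σ : 𝓞 K →+* 𝓞 K) ((x : 𝓞 K) + y * D.ω) = _ := pg_norm D x y
  rw [h4] at h3
  have h5 := Int.associated_iff.1 (associated_of_dvd_dvd (pg_int_dvd D _ _ h3.dvd)
    (pg_int_dvd D _ _ h3.symm.dvd))
  have hB0 : (Ideal.absNorm B : ℤ) ≠ 0 := by
    rw [Nat.cast_ne_zero, Ne, Ideal.absNorm_eq_zero_iff]; exact nonZeroDivisors.ne_zero mB
  refine ⟨2 * x + D.e * y, y, 2 * Ideal.absNorm B, by simpa using hB0, ?_⟩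
  push_cast at h5
  have hnn : 0 ≤ 4 * (x ^ 2 + D.e * x * y - D.q * y ^ 2) := by nlinarith [sq_nonneg (2 * x + D.e * y), sq_nonneg y]
  have hnn2 : (0 : ℤ) ≤ Ideal.absNorm I * (Ideal.absNorm B * Ideal.absNorm B) := by positivity
  rcases h5 with h5 | h5
  · linear_combination -4 * h5
  · have e1 : (Ideal.absNorm I : ℤ) * (Ideal.absNorm B * Ideal.absNorm B) = 0 := by linarith
    have e2 : x ^ 2 + D.e * x * y - D.q * y ^ 2 = 0 := by linarith
    linear_combination 4 * e1 - 4 * e2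
/-- (Principal Genus Theorem for imaginary quadratic fields) Let `Δ < 0` be a fundamental
discriminant with factorization `Δ = Δ₁ ⋯ Δ_t` into prime discriminants (encoded as the
finite set `S` of prime discriminants with product `Δ`), and let `K = ℚ(√Δ)` (formalized as
any degree-2 number field containing a square root of `Δ`). An ideal class `c ∈ Cl(K)` is a
square if and only if for every nonzero ideal `𝔞` of `O_K` belonging to `c` and coprime to
`Δ`, the Kronecker symbols `(Δ_j / N𝔞)` equal `1` for all `j`, where `N𝔞` is the absolute
norm of `𝔞`. -/
theorem principal_genus_theorem
    (Δ : ℤ) (hΔ : IsFundamentalDiscriminant Δ) (hneg : Δ < 0)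
    (S : Finset ℤ) (hS : ∀ d ∈ S, IsPrimeDiscriminant d) (hprod : (∏ d ∈ S, d) = Δ)
    (K : Type) [Field K] [NumberField K]
    (hdeg : Module.finrank ℚ K = 2)
    (α : K) (hα : α ^ 2 = (Δ : K))
    (c : ClassGroup (𝓞 K)) :
    IsSquare c ↔
      ∀ (𝔞 : Ideal (𝓞 K)) (h𝔞 : 𝔞 ∈ (Ideal (𝓞 K))⁰),
        ClassGroup.mk0 ⟨𝔞, h𝔞⟩ = c →
        IsCoprime 𝔞 (Ideal.span {(Δ : 𝓞 K)}) →
        ∀ d ∈ S, kroneckerSym d (Ideal.absNorm 𝔞) = 1 := by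
  obtain ⟨D, hD⟩ := pg_data Δ hΔ hneg hdeg α hα
  constructor
  · rintro hsq I hI rfl hcop
    have hI0 : I ≠ ⊥ := nonZeroDivisors.ne_zero hI
    obtain ⟨X, Y, w, hw, h⟩ := pg_norm_of_sq hdeg D (by rwa [hD]) I hI hsq
    rw [hD] at h
    refine pg_fwd Δ hΔ S hS hprod _ ?_ (pg_coprime_norm hdeg D Δ I hI0 hcop) X Y w hw h
    exact Nat.pos_of_ne_zero (by rwa [Ne, Ideal.absNorm_eq_zero_iff])
  · intro H
    obtain ⟨I, hI, rfl, hcop⟩ := pg_coprime_rep Δ hneg.ne c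
    obtain ⟨g, J, k, hg, hIJ, hk⟩ := pg_primitive D I (nonZeroDivisors.ne_zero hI)
    have hJ0 : J ≠ ⊥ := by
      rintro rfl
      rw [Ideal.mul_bot] at hIJ
      exact nonZeroDivisors.ne_zero hI hIJ
    have hJ : J ∈ (Ideal (𝓞 K))⁰ := mem_nonZeroDivisors_of_ne_zero hJ0
    have hcl : ClassGroup.mk0 ⟨J, hJ⟩ = ClassGroup.mk0 ⟨I, hI⟩ :=
      ClassGroup.mk0_eq_mk0_iff.2 ⟨(g : 𝓞 K), 1, by exact_mod_cast hg, one_ne_zero, by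
        change Ideal.span {(g : 𝓞 K)} * J = Ideal.span {1} * I
        rw [← hIJ, Ideal.span_singleton_one, Ideal.top_mul]⟩
    have hcopJ : IsCoprime J (Ideal.span {(Δ : 𝓞 K)}) := by
      rw [Ideal.isCoprime_iff_sup_eq] at hcop ⊢
      rw [eq_top_iff, ← hcop]
      refine sup_le_sup_right ?_ _
      rw [hIJ]
      exact Ideal.mul_le_right
    have hpos : 0 < Ideal.absNorm J :=
      Nat.pos_of_ne_zero (by rwa [Ne, Ideal.absNorm_eq_zero_iff])
    have hr := pg_prim_norm D J k hk
    rw [hD] at hr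
    obtain ⟨X, Y, w, hw, h⟩ := pg_bwd Δ hΔ hneg S hS hprod (Ideal.absNorm J) hpos
      (pg_coprime_norm hdeg D Δ J hJ0 hcopJ) _ hr (H J hJ hcl hcopJ)
    rw [← hcl]
    exact pg_sq_of_norm hdeg D J hJ X Y w hw (by rw [hD]; exact h)
end
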